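/- arXiv:2006.09629 — 7 statements merged into one kernel-verified Lean document; each statement's English description precedes it below -/
import Mathlib

section
/- Let S and T be types, m and N positive integers, and suppose given for every σ ∈ T a finite subset F(σ) ⊆ S with card F(σ) ≤ m together with coefficients ε(σ,τ) ∈ ℝ with |ε(σ,τ)| ≤ 1, such that every τ ∈ S satisfies τ ∈ F(σ) for at most N elements σ ∈ T. For θ : S → ℝ define δθ : T → ℝ by δθ(σ) = Σ_{τ ∈ F(σ)} ε(σ,τ)·θ(τ). Then for every Young function φ and every θ : S → ℝ, the Luxembourg norms with respect to counting measure satisfy ‖δθ‖_{ℓ^φ(T)} ≤ max(m, N)·‖θ‖_{ℓ^φ(S)}; in particular δ : ℓ^φ(S) → ℓ^φ(T) is a bounded linear operator. -/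
open MeasureTheory
open scoped ENNReal

/-- A Young function: even, convex, nonnegative, and vanishing exactly at `0`. -/
def IsYoung (φ : ℝ → ℝ) : Prop :=
  (∀ t, φ (-t) = φ t) ∧ ConvexOn ℝ Set.univ φ ∧ (∀ t, 0 ≤ φ t) ∧ (∀ t, φ t = 0 ↔ t = 0)

/-- The Luxembourg norm `‖f‖_{L^φ} = inf {γ > 0 : ∫ φ(f/γ) dμ ≤ 1}` (with `inf ∅ = ∞`). -/
noncomputable def luxNorm {Z : Type*} [MeasurableSpace Z] (μ : Measure Z) (φ : ℝ → ℝ)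
    (f : Z → ℝ) : ℝ≥0∞ :=
  sInf (ENNReal.ofReal ''
    {γ : ℝ | 0 < γ ∧ ∫⁻ z, ENNReal.ofReal (φ (f z / γ)) ∂μ ≤ 1})

/-!
The operator is treated as a matrix `a`, as in the Schur test for `ℓᵖ`. Suppose its absolute row
sums and column sums are at most `c`. For `0 < γ`, the weights `|a σ τ| / c` have sum at most `1`
along each row, so Jensen's inequality (the missing mass is placed at `0`, and evenness absorbs the
signs) gives `φ ((∑ τ, a σ τ * θ τ) / (c * γ)) ≤ ∑ τ, |a σ τ| / c * φ (θ τ / γ)`. Summing over `σ`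
and interchanging the sums, the column bound shows that every `γ` admissible for `θ` makes `c * γ`
admissible for the image of `θ`.
-/

open scoped NNReal

theorem map_sum_smul_le_sum_abs_mul_of_even {ι E : Type*} [AddCommGroup E] [Module ℝ E]
    {φ : E → ℝ} (hconv : ConvexOn ℝ Set.univ φ) (heven : φ.Even) (hzero : φ 0 ≤ 0)
    (s : Finset ι) {a : ι → ℝ} (ha : ∑ i ∈ s, |a i| ≤ 1) (x : ι → E) :
    φ (∑ i ∈ s, a i • x i) ≤ ∑ i ∈ s, |a i| * φ (x i) := by
  have absorb_sign (i : ι) : ∃ y, a i • x i = |a i| • y ∧ φ y = φ (x i) := by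
    rcases abs_choice (a i) with h | h
    · exact ⟨x i, by rw [h], rfl⟩
    · exact ⟨-x i, by rw [h, neg_smul_neg], heven _⟩
  choose y hay hφy using absorb_sign
  have jensen := hconv.map_add_sum_le (t := s) (w := fun i ↦ |a i|) (p := y)
    (v := 1 - ∑ i ∈ s, |a i|) (q := 0) (fun _ _ ↦ abs_nonneg _) (sub_add_cancel _ _)
    (fun _ _ ↦ Set.mem_univ _) (sub_nonneg.2 ha) (Set.mem_univ _)
  calc φ (∑ i ∈ s, a i • x i)
      ≤ (1 - ∑ i ∈ s, |a i|) * φ 0 + ∑ i ∈ s, |a i| * φ (x i) := by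
        simpa only [smul_zero, zero_add, smul_eq_mul, ← hay, hφy] using jensen
    _ ≤ ∑ i ∈ s, |a i| * φ (x i) :=
        add_le_of_nonpos_left (mul_nonpos_of_nonneg_of_nonpos (sub_nonneg.2 ha) hzero)

theorem tsum_sum_comm_subtype {S T : Type*} (F : T → Finset S) (f : T → S → ℝ≥0∞) :
    ∑' σ, ∑ τ ∈ F σ, f σ τ = ∑' τ, ∑' σ : {σ | τ ∈ F σ}, f σ τ := by
  calc ∑' σ, ∑ τ ∈ F σ, f σ τ
      = ∑' σ, ∑' τ, (F σ : Set S).indicator (f σ) τ := by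
        simp only [← Finset.tsum_subtype', tsum_subtype]
    _ = ∑' τ, ∑' σ, (F σ : Set S).indicator (f σ) τ := ENNReal.tsum_comm
    _ = ∑' τ, ∑' σ : {σ | τ ∈ F σ}, f σ τ :=
        tsum_congr fun τ ↦ (tsum_subtype {σ | τ ∈ F σ} fun σ ↦ f σ τ).symm

theorem sum_norm_le_of_card_le {S E : Type*} [SeminormedAddGroup E] {s : Finset S} {m : ℕ}
    (hs : s.card ≤ m) {a : S → E} (ha : ∀ τ ∈ s, ‖a τ‖ ≤ 1) : ∑ τ ∈ s, ‖a τ‖ ≤ m :=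
  calc ∑ τ ∈ s, ‖a τ‖ ≤ s.card • (1 : ℝ) := Finset.sum_le_card_nsmul s _ 1 ha
    _ = s.card := nsmul_one _
    _ ≤ m := by exact_mod_cast hs

theorem tsum_enorm_le_of_encard_le {T E : Type*} [SeminormedAddGroup E] {A : Set T} {N : ℕ}
    (hA : A.encard ≤ N) {a : T → E} (ha : ∀ σ ∈ A, ‖a σ‖ ≤ 1) : ∑' σ : A, ‖a σ‖ₑ ≤ N :=
  calc ∑' σ : A, ‖a σ‖ₑ
      ≤ ∑' _ : A, 1 := ENNReal.tsum_le_tsum fun σ ↦ by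
        rw [← ofReal_norm]
        exact ENNReal.ofReal_le_one.2 (ha σ σ.2)
    _ = A.encard := ENNReal.tsum_set_one A
    _ ≤ N := by exact_mod_cast hA

theorem luxNorm_le_mul_luxNorm {Y Z : Type*} [MeasurableSpace Y] [MeasurableSpace Z]
    {μ : Measure Y} {ν : Measure Z} {φ ψ : ℝ → ℝ} {f : Y → ℝ} {g : Z → ℝ} {c : ℝ≥0} (hc : 0 < c)
    (h : ∀ γ : ℝ, 0 < γ → ∫⁻ y, ENNReal.ofReal (φ (f y / γ)) ∂μ ≤ 1 →
      ∫⁻ z, ENNReal.ofReal (ψ (g z / (c * γ))) ∂ν ≤ 1) :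
    luxNorm ν ψ g ≤ c * luxNorm μ φ f := by
  have hc₀ : (c : ℝ≥0∞) ≠ 0 := ENNReal.coe_ne_zero.2 hc.ne'
  rw [← ENNReal.div_le_iff' hc₀ ENNReal.coe_ne_top]
  refine le_sInf ?_
  rintro _ ⟨γ, ⟨hγ, hf⟩, rfl⟩
  rw [ENNReal.div_le_iff' hc₀ ENNReal.coe_ne_top, ← ENNReal.ofReal_coe_nnreal,
    ← ENNReal.ofReal_mul c.coe_nonneg]
  exact sInf_le ⟨c * γ, ⟨by positivity, h γ hγ hf⟩, rfl⟩

section SchurTest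

variable {S T : Type*} [MeasurableSpace S] [MeasurableSingletonClass S]
  [MeasurableSpace T] [MeasurableSingletonClass T] (F : T → Finset S)
  {a : T → S → ℝ} {φ : ℝ → ℝ}

theorem lintegral_count_sum_mul_le (hconv : ConvexOn ℝ Set.univ φ) (heven : φ.Even)
    (hzero : φ 0 = 0) {B : ℝ≥0∞} (hrow : ∀ σ, ∑ τ ∈ F σ, |a σ τ| ≤ 1)
    (hcol : ∀ τ, ∑' σ : {σ | τ ∈ F σ}, ‖a σ τ‖ₑ ≤ B) (θ : S → ℝ) :
    ∫⁻ σ, ENNReal.ofReal (φ (∑ τ ∈ F σ, a σ τ * θ τ)) ∂Measure.count ≤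
      B * ∫⁻ τ, ENNReal.ofReal (φ (θ τ)) ∂Measure.count := by
  have row_le (σ : T) : ENNReal.ofReal (φ (∑ τ ∈ F σ, a σ τ * θ τ)) ≤
      ∑ τ ∈ F σ, ‖a σ τ‖ₑ * ENNReal.ofReal (φ (θ τ)) := by
    calc ENNReal.ofReal (φ (∑ τ ∈ F σ, a σ τ * θ τ))
        ≤ ENNReal.ofReal (∑ τ ∈ F σ, |a σ τ| * φ (θ τ)) := ENNReal.ofReal_le_ofReal <|
          map_sum_smul_le_sum_abs_mul_of_even hconv heven hzero.le (F σ) (hrow σ) θ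
      _ ≤ ∑ τ ∈ F σ, ENNReal.ofReal (|a σ τ| * φ (θ τ)) :=
          Finset.le_sum_of_subadditive _ ENNReal.ofReal_zero.le
            (fun _ _ ↦ ENNReal.ofReal_add_le) _ _
      _ = ∑ τ ∈ F σ, ‖a σ τ‖ₑ * ENNReal.ofReal (φ (θ τ)) := by
          simp only [ENNReal.ofReal_mul (abs_nonneg _), Real.enorm_eq_ofReal_abs]
  simp only [lintegral_count]
  calc ∑' σ, ENNReal.ofReal (φ (∑ τ ∈ F σ, a σ τ * θ τ))
      ≤ ∑' σ, ∑ τ ∈ F σ, ‖a σ τ‖ₑ * ENNReal.ofReal (φ (θ τ)) := ENNReal.tsum_le_tsum row_le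
    _ = ∑' τ, (∑' σ : {σ | τ ∈ F σ}, ‖a σ τ‖ₑ) * ENNReal.ofReal (φ (θ τ)) := by
        simp only [tsum_sum_comm_subtype, ENNReal.tsum_mul_right]
    _ ≤ ∑' τ, B * ENNReal.ofReal (φ (θ τ)) := by gcongr with τ; exact hcol τ
    _ = B * ∑' τ, ENNReal.ofReal (φ (θ τ)) := ENNReal.tsum_mul_left

theorem coboundary_luxNorm_le_general (hconv : ConvexOn ℝ Set.univ φ) (heven : φ.Even)
    (hzero : φ 0 = 0) {c : ℝ≥0} (hc : 0 < c) (hrow : ∀ σ, ∑ τ ∈ F σ, |a σ τ| ≤ c)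
    (hcol : ∀ τ, ∑' σ : {σ | τ ∈ F σ}, ‖a σ τ‖ₑ ≤ c) (θ : S → ℝ) :
    luxNorm (Measure.count : Measure T) φ (fun σ ↦ ∑ τ ∈ F σ, a σ τ * θ τ) ≤
      c * luxNorm (Measure.count : Measure S) φ θ := by
  refine luxNorm_le_mul_luxNorm hc fun γ _ hθ ↦ ?_
  have row_sum_div_le (σ : T) : ∑ τ ∈ F σ, |a σ τ / c| ≤ 1 := by
    simpa only [abs_div, NNReal.abs_eq, ← Finset.sum_div] using
      div_le_one_of_le₀ (hrow σ) c.coe_nonneg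
  have col_sum_div_le (τ : S) : ∑' σ : {σ | τ ∈ F σ}, ‖a σ τ / c‖ₑ ≤ 1 := by
    have enorm_div_eq (σ : T) : ‖a σ τ / c‖ₑ = ‖a σ τ‖ₑ * (c : ℝ≥0∞)⁻¹ := by
      rw [Real.enorm_eq_ofReal_abs, abs_div, NNReal.abs_eq,
        ENNReal.ofReal_div_of_pos (by positivity), ENNReal.ofReal_coe_nnreal,
        Real.enorm_eq_ofReal_abs, div_eq_mul_inv]
    simp only [enorm_div_eq, ENNReal.tsum_mul_right]
    exact ENNReal.div_le_of_le_mul ((hcol τ).trans_eq (one_mul _).symm)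
  calc ∫⁻ σ, ENNReal.ofReal (φ ((∑ τ ∈ F σ, a σ τ * θ τ) / (c * γ))) ∂Measure.count
      = ∫⁻ σ, ENNReal.ofReal (φ (∑ τ ∈ F σ, a σ τ / c * (θ τ / γ))) ∂Measure.count := by
        simp only [Finset.sum_div, mul_div_mul_comm]
    _ ≤ 1 * ∫⁻ τ, ENNReal.ofReal (φ (θ τ / γ)) ∂Measure.count :=
        lintegral_count_sum_mul_le F hconv heven hzero row_sum_div_le col_sum_div_le fun τ ↦ θ τ / γ
    _ ≤ 1 := by rwa [one_mul]

end SchurTest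

/-- the abstract coboundary operator
`δθ(σ) = Σ_{τ ∈ F(σ)} ε(σ,τ)·θ(τ)`, where `F(σ)` has at most `m` elements, the
coefficients `ε` are bounded by `1`, and every `τ` lies in `F(σ)` for at most `N`
elements `σ`, is bounded from `ℓ^φ(S)` to `ℓ^φ(T)` with norm at most `max m N`. -/
theorem coboundary_luxNorm_le {S T : Type*}
    [MeasurableSpace S] [MeasurableSingletonClass S]
    [MeasurableSpace T] [MeasurableSingletonClass T]
    (m N : ℕ) (hm : 0 < m) (hN : 0 < N)
    (F : T → Finset S) (hFcard : ∀ σ : T, (F σ).card ≤ m)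
    (ε : T → S → ℝ) (hε : ∀ (σ : T) (τ : S), |ε σ τ| ≤ 1)
    (hmult : ∀ τ : S, {σ : T | τ ∈ F σ}.Finite ∧ {σ : T | τ ∈ F σ}.ncard ≤ N)
    (φ : ℝ → ℝ) (hφ : IsYoung φ) (θ : S → ℝ) :
    luxNorm (Measure.count : Measure T) φ (fun σ => ∑ τ ∈ F σ, ε σ τ * θ τ) ≤
      (max m N : ℕ) * luxNorm (Measure.count : Measure S) φ θ := by
  obtain ⟨heven, hconv, -, hzero⟩ := hφ
  have hrow (σ : T) : ∑ τ ∈ F σ, |ε σ τ| ≤ (max m N : ℕ) :=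
    sum_norm_le_of_card_le (a := ε σ) ((hFcard σ).trans (le_max_left m N)) fun τ _ ↦ hε σ τ
  have hcol (τ : S) : ∑' σ : {σ | τ ∈ F σ}, ‖ε σ τ‖ₑ ≤ (max m N : ℕ) :=
    tsum_enorm_le_of_encard_le (a := (ε · τ)) (Set.encard_le_coe_iff_finite_ncard_le.2
      ⟨(hmult τ).1, (hmult τ).2.trans (le_max_right m N)⟩) fun σ _ ↦ hε σ τ
  have hpos : (0 : ℝ≥0) < (max m N : ℕ) := Nat.cast_pos.2 (lt_max_of_lt_left hm)
  exact coboundary_luxNorm_le_general F hconv heven ((hzero 0).2 rfl) hpos hrow hcol θ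
end

section
/- Let S and T be types, L and D positive integers, A > 0 a real number, and c : T × S → ℝ a function such that for every σ ∈ T the set {τ ∈ S : c(σ,τ) ≠ 0} has at most L elements and |c(σ,τ)| ≤ A for all τ, and such that for every τ ∈ S the set {σ ∈ T : c(σ,τ) ≠ 0} has at most D elements. For θ : S → ℝ define c·θ : T → ℝ by (c·θ)(σ) = Σ_{τ : c(σ,τ)≠0} c(σ,τ)·θ(τ). Then for every Young function φ, the Luxembourg norms with respect to counting measure satisfy ‖c·θ‖_{ℓ^φ(T)} ≤ A·max(L, D)·‖θ‖_{ℓ^φ(S)}. -/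
open MeasureTheory
open scoped ENNReal

open scoped NNReal

/-!
This is the Schur test for Orlicz sequence spaces. Suppose that every row and every column of `c`
has absolute sum at most `1`. Along each row, Jensen's inequality (with the missing mass put at `0`,
where `φ` vanishes, and signs absorbed by evenness) gives `φ (∑ c σ τ * θ τ) ≤ ∑ |c σ τ| * φ (θ τ)`;
summing over `σ` and exchanging the sums, the column bound gives `∑ φ (c·θ) ≤ ∑ φ (θ)`. Rescaling
by `K` handles absolute sums at most `K`, and under the hypotheses of the theorem these are at most
`A * L` along rows and `A * D` along columns.
-/

section Jensen

variable {ι E : Type*} [AddCommGroup E] [Module ℝ E] {φ : E → ℝ}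

theorem map_sum_smul_le_of_convexOn_even (hconv : ConvexOn ℝ Set.univ φ)
    (heven : Function.Even φ) (h0 : φ 0 = 0) {s : Finset ι} {w : ι → ℝ}
    (hw : ∑ i ∈ s, |w i| ≤ 1) (x : ι → E) :
    φ (∑ i ∈ s, w i • x i) ≤ ∑ i ∈ s, |w i| * φ (x i) := by
  have absorb_sign : ∀ i, ∃ y, w i • x i = |w i| • y ∧ φ (x i) = φ y := fun i ↦ by
    rcases abs_choice (w i) with h | h
    · exact ⟨x i, by rw [h], rfl⟩
    · exact ⟨-x i, by rw [h, neg_smul_neg], (heven _).symm⟩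
  choose y hy hφy using absorb_sign
  simpa [hy, hφy, h0] using
    hconv.map_add_sum_le (p := y) (q := 0) (fun i _ ↦ abs_nonneg (w i)) (sub_add_cancel 1 _)
      (fun _ _ ↦ Set.mem_univ _) (sub_nonneg.2 hw) (Set.mem_univ _)

theorem ofReal_map_hasSum_le_of_convexOn_even [TopologicalSpace E]
    (hconv : ConvexOn ℝ Set.univ φ) (hcont : Continuous φ) (heven : Function.Even φ)
    (h0 : φ 0 = 0) {w : ι → ℝ} (hw : ∑' i, ‖w i‖ₑ ≤ 1) {x : ι → E} {y : E}
    (hy : HasSum (fun i ↦ w i • x i) y) :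
    ENNReal.ofReal (φ y) ≤ ∑' i, ‖w i‖ₑ * ENNReal.ofReal (φ (x i)) := by
  refine le_of_tendsto ((ENNReal.continuous_ofReal.comp hcont).tendsto y |>.comp hy)
    (.of_forall fun s ↦ ?_)
  have hws : ∑ i ∈ s, |w i| ≤ 1 := by
    rw [← ENNReal.ofReal_le_one, ENNReal.ofReal_sum_of_nonneg fun _ _ ↦ abs_nonneg _]
    simpa only [← Real.enorm_eq_ofReal_abs] using (ENNReal.sum_le_tsum s).trans hw
  calc ENNReal.ofReal (φ (∑ i ∈ s, w i • x i))
      ≤ ENNReal.ofReal (∑ i ∈ s, |w i| * φ (x i)) :=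
        ENNReal.ofReal_le_ofReal (map_sum_smul_le_of_convexOn_even hconv heven h0 hws x)
    _ ≤ ∑ i ∈ s, ENNReal.ofReal (|w i| * φ (x i)) :=
        Finset.le_sum_of_subadditive _ ENNReal.ofReal_zero.le (fun _ _ ↦ ENNReal.ofReal_add_le) _ _
    _ = ∑ i ∈ s, ‖w i‖ₑ * ENNReal.ofReal (φ (x i)) := by
        simp only [ENNReal.ofReal_mul (abs_nonneg _), Real.enorm_eq_ofReal_abs]
    _ ≤ ∑' i, ‖w i‖ₑ * ENNReal.ofReal (φ (x i)) := ENNReal.sum_le_tsum s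

end Jensen

namespace IsYoung

variable {S T : Type*} {φ : ℝ → ℝ}

theorem continuous (hφ : IsYoung φ) : Continuous φ :=
  continuousOn_univ.1 (hφ.2.1.continuousOn isOpen_univ)

theorem map_zero (hφ : IsYoung φ) : φ 0 = 0 :=
  (hφ.2.2.2 0).2 rfl

theorem ofReal_map_tsum_mul_le (hφ : IsYoung φ) {w : S → ℝ} (hw : ∑' τ, ‖w τ‖ₑ ≤ 1)
    (θ : S → ℝ) :
    ENNReal.ofReal (φ (∑' τ, w τ * θ τ)) ≤ ∑' τ, ‖w τ‖ₑ * ENNReal.ofReal (φ (θ τ)) := by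
  by_cases hsum : Summable fun τ ↦ w τ * θ τ
  · exact ofReal_map_hasSum_le_of_convexOn_even hφ.2.1 hφ.continuous hφ.1 hφ.map_zero hw
      hsum.hasSum
  · simp [tsum_eq_zero_of_not_summable hsum, hφ.map_zero]

theorem tsum_ofReal_map_tsum_mul_le (hφ : IsYoung φ) {c : T → S → ℝ}
    (hrow : ∀ σ, ∑' τ, ‖c σ τ‖ₑ ≤ 1) (hcol : ∀ τ, ∑' σ, ‖c σ τ‖ₑ ≤ 1) (θ : S → ℝ) :
    ∑' σ, ENNReal.ofReal (φ (∑' τ, c σ τ * θ τ)) ≤ ∑' τ, ENNReal.ofReal (φ (θ τ)) :=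
  calc ∑' σ, ENNReal.ofReal (φ (∑' τ, c σ τ * θ τ))
      ≤ ∑' σ, ∑' τ, ‖c σ τ‖ₑ * ENNReal.ofReal (φ (θ τ)) :=
        ENNReal.tsum_le_tsum fun σ ↦ hφ.ofReal_map_tsum_mul_le (hrow σ) θ
    _ = ∑' τ, (∑' σ, ‖c σ τ‖ₑ) * ENNReal.ofReal (φ (θ τ)) := by
        simp only [← ENNReal.tsum_mul_right]
        exact ENNReal.tsum_comm
    _ ≤ ∑' τ, ENNReal.ofReal (φ (θ τ)) :=
        ENNReal.tsum_le_tsum fun τ ↦ mul_le_of_le_one_left' (hcol τ)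

end IsYoung

theorem luxNorm_le_mul_luxNorm_of_lintegral_le_one {Y Z : Type*} [MeasurableSpace Y]
    [MeasurableSpace Z] {μ : Measure Y} {ν : Measure Z} {φ ψ : ℝ → ℝ} {f : Y → ℝ} {g : Z → ℝ}
    {K : ℝ≥0} (hK : 0 < K) (h : ∀ γ : ℝ, 0 < γ → ∫⁻ y, ENNReal.ofReal (φ (f y / γ)) ∂μ ≤ 1 →
      ∫⁻ z, ENNReal.ofReal (ψ (g z / (K * γ))) ∂ν ≤ 1) :
    luxNorm ν ψ g ≤ K * luxNorm μ φ f := by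
  have hK0 : (K : ℝ≥0∞) ≠ 0 := ENNReal.coe_ne_zero.2 hK.ne'
  simp only [luxNorm, sInf_image, ENNReal.mul_iInf_of_ne hK0 ENNReal.coe_ne_top]
  refine le_iInf₂ fun γ hγ ↦ iInf₂_le_of_le (K * γ) ⟨mul_pos hK hγ.1, h γ hγ.1 hγ.2⟩ ?_
  rw [ENNReal.ofReal_mul K.coe_nonneg, ENNReal.ofReal_coe_nnreal]

theorem tsum_enorm_div_le_one {ι : Type*} {f : ι → ℝ} {K : ℝ≥0} (hK : 0 < K)
    (hf : ∑' i, ‖f i‖ₑ ≤ K) : ∑' i, ‖f i / K‖ₑ ≤ 1 := by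
  have enorm_div_eq (i : ι) : ‖f i / K‖ₑ = ‖f i‖ₑ * (K : ℝ≥0∞)⁻¹ := by
    simp [div_eq_mul_inv, enorm_mul, enorm_inv, hK.ne']
  simp only [enorm_div_eq, ENNReal.tsum_mul_right]
  exact ENNReal.div_le_of_le_mul (by rwa [one_mul])

theorem tsum_le_encard_support_mul {ι : Type*} {f : ι → ℝ≥0∞} {a : ℝ≥0∞} (hf : ∀ i, f i ≤ a) :
    ∑' i, f i ≤ f.support.encard * a := by
  rw [← tsum_subtype_support, ← ENNReal.tsum_set_const]
  exact ENNReal.tsum_le_tsum fun i ↦ hf i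

theorem tsum_enorm_le_mul_of_ncard_support_le {ι : Type*} {f : ι → ℝ} {A : ℝ} {n : ℕ}
    (hf : ∀ i, |f i| ≤ A) (hfin : f.support.Finite) (hcard : f.support.ncard ≤ n) :
    ∑' i, ‖f i‖ₑ ≤ ENNReal.ofReal A * n := by
  have enorm_le (i : ι) : ‖f i‖ₑ ≤ ENNReal.ofReal A :=
    Real.enorm_eq_ofReal_abs (f i) ▸ ENNReal.ofReal_le_ofReal (hf i)
  have support_enorm_eq : (fun i ↦ ‖f i‖ₑ).support = f.support := by
    ext
    simp
  calc ∑' i, ‖f i‖ₑ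
      ≤ (fun i ↦ ‖f i‖ₑ).support.encard * ENNReal.ofReal A := tsum_le_encard_support_mul enorm_le
    _ = ENNReal.ofReal A * f.support.ncard := by
        rw [support_enorm_eq, ← hfin.cast_ncard_eq, ENat.toENNReal_coe, mul_comm]
    _ ≤ ENNReal.ofReal A * n := by gcongr

/-- If `luxNorm Measure.count φ θ < ∞`, then `θ` is bounded and each series `∑' τ, c σ τ * θ τ`
converges absolutely; the junk value `0` of a divergent series only occurs when the right-hand side
is infinite. -/
theorem pullback_luxNorm_le_general {S T : Type*} [MeasurableSpace S] [MeasurableSingletonClass S]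
    [MeasurableSpace T] [MeasurableSingletonClass T] {K : ℝ≥0} (hK : 0 < K) {c : T → S → ℝ}
    (hrow : ∀ σ, ∑' τ, ‖c σ τ‖ₑ ≤ K) (hcol : ∀ τ, ∑' σ, ‖c σ τ‖ₑ ≤ K) {φ : ℝ → ℝ}
    (hφ : IsYoung φ) (θ : S → ℝ) :
    luxNorm Measure.count φ (fun σ ↦ ∑' τ, c σ τ * θ τ) ≤ K * luxNorm Measure.count φ θ := by
  refine luxNorm_le_mul_luxNorm_of_lintegral_le_one hK fun γ _ h ↦ ?_
  rw [lintegral_count] at h ⊢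
  simp only [← tsum_div_const, mul_div_mul_comm]
  exact (hφ.tsum_ofReal_map_tsum_mul_le (fun σ ↦ tsum_enorm_div_le_one hK (hrow σ))
    (fun τ ↦ tsum_enorm_div_le_one hK (hcol τ)) _).trans h

/-- if `c : T × S → ℝ` has rows of support-size at most `L` with entries
bounded by `A`, and columns of support-size at most `D`, then
`(c·θ)(σ) = Σ_{τ : c(σ,τ) ≠ 0} c(σ,τ)·θ(τ)` defines an operator which is bounded from
`ℓ^φ(S)` to `ℓ^φ(T)` with norm at most `A·max(L,D)`. -/
theorem pullback_luxNorm_le {S T : Type*}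
    [MeasurableSpace S] [MeasurableSingletonClass S]
    [MeasurableSpace T] [MeasurableSingletonClass T]
    (L D : ℕ) (hL : 0 < L) (hD : 0 < D) (A : ℝ) (hA : 0 < A)
    (c : T → S → ℝ)
    (hrow : ∀ σ : T, {τ : S | c σ τ ≠ 0}.Finite ∧ {τ : S | c σ τ ≠ 0}.ncard ≤ L)
    (hbound : ∀ (σ : T) (τ : S), |c σ τ| ≤ A)
    (hcol : ∀ τ : S, {σ : T | c σ τ ≠ 0}.Finite ∧ {σ : T | c σ τ ≠ 0}.ncard ≤ D)
    (φ : ℝ → ℝ) (hφ : IsYoung φ) (θ : S → ℝ) :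
    luxNorm (Measure.count : Measure T) φ (fun σ => ∑ᶠ τ : S, c σ τ * θ τ) ≤
      ENNReal.ofReal A * (max L D : ℕ) * luxNorm (Measure.count : Measure S) φ θ := by
  have hK : 0 < A.toNNReal * (max L D : ℕ) :=
    mul_pos (Real.toNNReal_pos.2 hA) (by exact_mod_cast lt_max_of_lt_left hL)
  have finsum_eq_tsum (σ : T) : ∑ᶠ τ, c σ τ * θ τ = ∑' τ, c σ τ * θ τ :=
    (tsum_eq_finsum ((hrow σ).1.subset fun _ h ↦ left_ne_zero_of_mul h)).symm
  have row_le (σ : T) : ∑' τ, ‖c σ τ‖ₑ ≤ ENNReal.ofReal A * (max L D : ℕ) :=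
    tsum_enorm_le_mul_of_ncard_support_le (hbound σ) (hrow σ).1 (le_max_of_le_left (hrow σ).2)
  have col_le (τ : S) : ∑' σ, ‖c σ τ‖ₑ ≤ ENNReal.ofReal A * (max L D : ℕ) :=
    tsum_enorm_le_mul_of_ncard_support_le (hbound · τ) (hcol τ).1 (le_max_of_le_right (hcol τ).2)
  simp only [finsum_eq_tsum]
  exact mod_cast pullback_luxNorm_le_general hK (mod_cast row_le) (mod_cast col_le) hφ θ
end

section
/- Let n ≥ 1 be an integer, let y ∈ ℝⁿ with ‖y‖ < 1, and let z ∈ ℝⁿ with z ≠ y. Then ∫₀¹ 𝟙{‖z − t·y‖ < (1−t)/2} · (1−t)^{−n−1} dt ≤ 2ⁿ / (n·‖z − y‖ⁿ), where 𝟙 denotes the indicator of the stated condition on t. -/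
open MeasureTheory
open scoped ENNReal

/-! Writing `z - y = (z - t • y) - (1 - t) • y`, the triangle inequality shows that the cone
condition `‖z - t • y‖ < c * (1 - t)` forces `‖z - y‖ < (c + ‖y‖) * (1 - t)`. The substitution
`r = 1 - t` therefore bounds the kernel by the tail of the integral of `r ^ (-s - 1)` beyond
`‖z - y‖ / K`, for any `K ≥ c + ‖y‖`; on the unit ball with `c = 1 / 2` one may take `K = 2`. -/

theorem norm_sub_le_norm_sub_smul_add {𝕜 E : Type*} [NormedField 𝕜] [SeminormedAddCommGroup E]
    [NormedSpace 𝕜 E] (t : 𝕜) (y z : E) :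
    ‖z - y‖ ≤ ‖z - t • y‖ + ‖1 - t‖ * ‖y‖ :=
  calc ‖z - y‖ = ‖(z - t • y) - (1 - t) • y‖ := by congr 1; module
    _ ≤ ‖z - t • y‖ + ‖(1 - t) • y‖ := norm_sub_le _ _
    _ = ‖z - t • y‖ + ‖1 - t‖ * ‖y‖ := by rw [norm_smul]

theorem norm_sub_div_lt_of_norm_sub_smul_lt {E : Type*} [SeminormedAddCommGroup E]
    [NormedSpace ℝ E] {c K t : ℝ} {y z : E} (hK : 0 < K) (hcK : c + ‖y‖ ≤ K) (ht : t ≤ 1)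
    (h : ‖z - t • y‖ < c * (1 - t)) :
    ‖z - y‖ / K < 1 - t := by
  rw [div_lt_iff₀' hK]
  have ht₀ : 0 ≤ 1 - t := sub_nonneg.mpr ht
  calc ‖z - y‖ ≤ ‖z - t • y‖ + (1 - t) * ‖y‖ := by
        simpa only [Real.norm_of_nonneg ht₀] using norm_sub_le_norm_sub_smul_add t y z
    _ < c * (1 - t) + (1 - t) * ‖y‖ := by gcongr
    _ = (c + ‖y‖) * (1 - t) := by ring
    _ ≤ K * (1 - t) := by gcongr

theorem lintegral_Ioi_ofReal_rpow {a d : ℝ} (ha : a < -1) (hd : 0 < d) :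
    ∫⁻ r in Set.Ioi d, ENNReal.ofReal (r ^ a) = ENNReal.ofReal (-d ^ (a + 1) / (a + 1)) := by
  have rpow_nonneg : 0 ≤ᵐ[volume.restrict (Set.Ioi d)] fun r : ℝ ↦ r ^ a :=
    (ae_restrict_mem measurableSet_Ioi).mono fun r hr ↦ Real.rpow_nonneg (hd.trans hr).le a
  rw [← ofReal_integral_eq_lintegral_ofReal (integrableOn_Ioi_rpow_of_lt ha hd) rpow_nonneg,
    integral_Ioi_rpow_of_lt ha hd]

theorem cone_kernel_estimate_general {E : Type*} [SeminormedAddCommGroup E] [NormedSpace ℝ E]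
    {s c K : ℝ} {y z : E} (hs : 0 < s) (hK : 0 < K) (hcK : c + ‖y‖ ≤ K) (hz : 0 < ‖z - y‖) :
    (∫⁻ t in Set.Iio (1 : ℝ),
        if ‖z - t • y‖ < c * (1 - t) then ENNReal.ofReal ((1 - t) ^ (-s - 1)) else 0) ≤
      ENNReal.ofReal (K ^ s / (s * ‖z - y‖ ^ s)) := by
  set d := ‖z - y‖ / K with hd
  let tail : Set ℝ := (1 - ·) ⁻¹' Set.Ioi d
  have measurableSet_tail : MeasurableSet tail := measurableSet_Ioi.preimage (by fun_prop)
  calc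
    _ ≤ ∫⁻ t in Set.Iio (1 : ℝ),
          tail.indicator (fun t ↦ ENNReal.ofReal ((1 - t) ^ (-s - 1))) t := by
      refine setLIntegral_mono' measurableSet_Iio fun t ht ↦ ?_
      split_ifs with h
      · rw [Set.indicator_of_mem]
        exact norm_sub_div_lt_of_norm_sub_smul_lt hK hcK ht.le h
      · exact zero_le
    _ ≤ ∫⁻ t in tail, ENNReal.ofReal ((1 - t) ^ (-s - 1)) :=
      (setLIntegral_le_lintegral _ _).trans_eq (lintegral_indicator measurableSet_tail _)
    _ = ∫⁻ r in Set.Ioi d, ENNReal.ofReal (r ^ (-s - 1)) :=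
      (Measure.measurePreserving_sub_left volume 1).setLIntegral_comp_preimage_emb
        (MeasurableEquiv.subLeft 1).measurableEmbedding (fun r ↦ ENNReal.ofReal (r ^ (-s - 1))) _
    _ = ENNReal.ofReal (-d ^ (-s - 1 + 1) / (-s - 1 + 1)) :=
      lintegral_Ioi_ofReal_rpow (by linarith) (div_pos hz hK)
    _ = ENNReal.ofReal (K ^ s / (s * ‖z - y‖ ^ s)) := by
      rw [sub_add_cancel, neg_div_neg_eq, hd, Real.rpow_neg (by positivity),
        Real.div_rpow hz.le hK.le, inv_div, div_div, mul_comm s]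

/-- the kernel estimate in the proof of the `L^φ` Poincaré lemma on the
Euclidean unit ball: for `y` in the unit ball of `ℝⁿ` and `z ≠ y`,
`∫₀¹ 𝟙{‖z − t·y‖ < (1−t)/2} (1−t)^{−n−1} dt ≤ 2ⁿ/(n‖z−y‖ⁿ)`. -/
theorem cone_kernel_estimate (n : ℕ) (hn : 1 ≤ n)
    (y z : EuclideanSpace ℝ (Fin n)) (hy : ‖y‖ < 1) (hz : z ≠ y) :
    (∫⁻ t in Set.Ioo (0 : ℝ) 1,
        if ‖z - t • y‖ < (1 - t) / 2 then ENNReal.ofReal ((1 - t) ^ (-(n : ℝ) - 1))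
        else 0) ≤
      ENNReal.ofReal (2 ^ n / (n * ‖z - y‖ ^ n)) := by
  refine (lintegral_mono_set Set.Ioo_subset_Iio_self).trans ?_
  simpa only [Real.rpow_natCast, inv_mul_eq_div] using cone_kernel_estimate_general
    (c := 2⁻¹) (K := 2) (Nat.cast_pos.mpr hn) two_pos (by linarith) (norm_sub_pos_iff.mpr hz)
end

section
/- Let n ≥ 1 be an integer and let B be the open unit ball of ℝⁿ with Lebesgue measure, and let ½B = B(0, 1/2). There exists a constant C > 0, depending only on n, such that for every Young function φ and every continuously differentiable function f : B → ℝ, one has ‖f − a‖_{L^φ(B)} ≤ C·‖ y ↦ ‖Df(y)‖ ‖_{L^φ(B)}, where a = (1/Vol(½B))·∫_{½B} f(x) dx, Df(y) denotes the (Fréchet) derivative of f at y with its operator norm, and ‖·‖_{L^φ(B)} denotes the Luxembourg norm with respect to Lebesgue measure on B. -/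
open MeasureTheory
open scoped ENNReal

/-!
If `x, y ∈ U` and `diam U ≤ d`, then `|f y - f x|` is at most the mean of `d * ‖Df‖` over the
segment from `x` to `y`. Applying the convex function `φ` to this bound, and to the representation
of `f y - ⨍_A f` as the mean of `f y - f x` over `x ∈ A`, Jensen's inequality bounds
`∫_U φ (f - ⨍_A f)` by the mean of `φ (d * ‖Df‖)` over all segments joining a point of `A` to a
point of `U`. A point at parameter `t ≥ 1/2` of a segment is the image of its endpoint `y` under a
homothety of ratio at least `1/2`, and for `t ≤ 1/2` the same holds with `x` in place of `y`; hence
this mean is at most `2 ^ n * (μ U / μ A) * ∫_U φ (d * ‖Df‖)`. Convexity of `φ` finally moves the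
constant inside the Luxembourg norm.
-/

open Set Module AffineMap

section EvenConvex

variable {φ : ℝ → ℝ}

theorem le_of_abs_le_of_even_convex (hφ : ConvexOn ℝ univ φ) (heven : Function.Even φ) {s t : ℝ}
    (hst : |s| ≤ |t|) : φ s ≤ φ t := by
  have hs : s ∈ segment ℝ (-|t|) |t| := by
    rw [segment_eq_Icc (neg_le_self (abs_nonneg t))]
    exact abs_le.1 hst
  have habs : φ |t| = φ t := by
    rcases abs_choice t with h | h <;> rw [h]
    exact heven t
  calc φ s ≤ max (φ (-|t|)) (φ |t|) := hφ.le_on_segment (mem_univ _) (mem_univ _) hs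
    _ = φ t := by rw [heven, max_self, habs]

theorem nonneg_of_even_convex (hφ : ConvexOn ℝ univ φ) (heven : Function.Even φ)
    (hzero : φ 0 = 0) (t : ℝ) : 0 ≤ φ t :=
  hzero ▸ le_of_abs_le_of_even_convex hφ heven (by simp)

theorem map_div_le_div_of_convex (hφ : ConvexOn ℝ univ φ) (hzero : φ 0 ≤ 0) {c : ℝ} (hc : 1 ≤ c)
    (t : ℝ) : φ (t / c) ≤ φ t / c := by
  have hc₀ : 0 < c := one_pos.trans_le hc
  have hinv : c⁻¹ ≤ 1 := inv_le_one_of_one_le₀ hc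
  calc φ (t / c) = φ (c⁻¹ • t + (1 - c⁻¹) • 0) := by simp [div_eq_inv_mul]
    _ ≤ c⁻¹ • φ t + (1 - c⁻¹) • φ 0 :=
      hφ.2 (mem_univ t) (mem_univ 0) (inv_nonneg.2 hc₀.le) (sub_nonneg.2 hinv) (add_sub_cancel _ _)
    _ ≤ φ t / c := by
      rw [smul_eq_mul, smul_eq_mul, div_eq_inv_mul]
      linarith [mul_nonpos_of_nonneg_of_nonpos (sub_nonneg.2 hinv) hzero]

end EvenConvex

section Jensen

variable {X E : Type*} [MeasurableSpace X] [NormedAddCommGroup E] [NormedSpace ℝ E]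
  [FiniteDimensional ℝ E] {μ : Measure X} {φ : E → ℝ}

theorem ofReal_map_average_le_laverage [IsFiniteMeasure μ] [NeZero μ] (hφ : ConvexOn ℝ univ φ)
    (hφ₀ : ∀ v, 0 ≤ φ v) {u : X → E} (hu : Integrable u μ) :
    ENNReal.ofReal (φ (⨍ x, u x ∂μ)) ≤ ⨍⁻ x, ENNReal.ofReal (φ (u x)) ∂μ := by
  have : CompleteSpace E := FiniteDimensional.complete ℝ E
  have hcont : ContinuousOn φ univ := hφ.continuousOn isOpen_univ
  have hpos : 0 ≤ᵐ[μ] φ ∘ u := .of_forall fun x => hφ₀ (u x)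
  by_cases hint : Integrable (φ ∘ u) μ
  · calc ENNReal.ofReal (φ (⨍ x, u x ∂μ)) ≤ ENNReal.ofReal (⨍ x, φ (u x) ∂μ) :=
          ENNReal.ofReal_le_ofReal
            (hφ.map_average_le hcont isClosed_univ (by simp) hu hint)
      _ = ⨍⁻ x, ENNReal.ofReal (φ (u x)) ∂μ := by
          rw [laverage_eq]
          exact ofReal_average hint hpos
  · have hmeas : AEStronglyMeasurable (φ ∘ u) μ :=
      (continuousOn_univ.1 hcont).comp_aestronglyMeasurable hu.aestronglyMeasurable
    have htop : ∫⁻ x, ENNReal.ofReal (φ (u x)) ∂μ = ∞ :=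
      not_ne_iff.1 fun h => hint ((lintegral_ofReal_ne_top_iff_integrable hmeas hpos).1 h)
    rw [laverage_eq, htop, ENNReal.top_div_of_ne_top (measure_ne_top μ univ)]
    exact le_top

theorem ofReal_map_sub_setAverage_le {A : Set X} (hφ : ConvexOn ℝ univ φ)
    (hφ₀ : ∀ v, 0 ≤ φ v) (hA₀ : μ A ≠ 0) (hA : μ A ≠ ∞) {u : X → E}
    (hu : IntegrableOn u A μ) (a : E) :
    ENNReal.ofReal (φ (a - ⨍ x in A, u x ∂μ)) ≤
      (μ A)⁻¹ * ∫⁻ x in A, ENNReal.ofReal (φ (a - u x)) ∂μ := by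
  have : CompleteSpace E := FiniteDimensional.complete ℝ E
  have : Fact (μ A < ∞) := ⟨hA.lt_top⟩
  have : NeZero (μ.restrict A) := ⟨mt Measure.restrict_eq_zero.1 hA₀⟩
  have hconst : IntegrableOn (fun _ => a) A μ := integrableOn_const hA
  have hmean : a - ⨍ x in A, u x ∂μ = ⨍ x in A, (a - u x) ∂μ := by
    rw [average_eq _ (fun x => a - u x), integral_sub hconst hu, smul_sub, ← average_eq,
      ← average_eq, average_const]
  rw [hmean, ← ENNReal.div_eq_inv_mul, ← setLAverage_eq]
  exact ofReal_map_average_le_laverage hφ hφ₀ (hconst.sub hu)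

end Jensen

section LuxNorm

variable {Y Z : Type*} [MeasurableSpace Y] [MeasurableSpace Z] {μ : Measure Y} {ν : Measure Z}
  {φ : ℝ → ℝ} {f : Y → ℝ} {g : Z → ℝ} {c : ℝ}

theorem luxNorm_le_ofReal_mul (hc : 0 < c)
    (h : ∀ γ > 0, ∫⁻ z, ENNReal.ofReal (φ (g z / γ)) ∂ν ≤ 1 →
      ∫⁻ y, ENNReal.ofReal (φ (f y / (c * γ))) ∂μ ≤ 1) :
    luxNorm μ φ f ≤ ENNReal.ofReal c * luxNorm ν φ g := by
  have hc₀ : ENNReal.ofReal c ≠ 0 := (ENNReal.ofReal_pos.2 hc).ne'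
  rw [← ENNReal.div_le_iff' hc₀ ENNReal.ofReal_ne_top]
  refine le_sInf ?_
  rintro _ ⟨γ, ⟨hγ, hle⟩, rfl⟩
  rw [ENNReal.div_le_iff' hc₀ ENNReal.ofReal_ne_top, ← ENNReal.ofReal_mul hc.le]
  exact sInf_le ⟨c * γ, ⟨mul_pos hc hγ, h γ hγ hle⟩, rfl⟩

theorem luxNorm_const_mul_le (hc : 0 < c) :
    luxNorm ν φ (fun z => c * g z) ≤ ENNReal.ofReal c * luxNorm ν φ g :=
  luxNorm_le_ofReal_mul hc fun γ _ hγ => by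
    simpa only [mul_div_mul_left _ γ hc.ne'] using hγ

theorem luxNorm_le_ofReal_mul_of_lintegral_le (hφ : ConvexOn ℝ univ φ) (hzero : φ 0 ≤ 0)
    (hc : 1 ≤ c)
    (h : ∀ γ > 0, ∫⁻ y, ENNReal.ofReal (φ (f y / γ)) ∂μ ≤
      ENNReal.ofReal c * ∫⁻ z, ENNReal.ofReal (φ (g z / γ)) ∂ν) :
    luxNorm μ φ f ≤ ENNReal.ofReal c * luxNorm ν φ g := by
  have hc₀ : 0 < c := one_pos.trans_le hc
  refine luxNorm_le_ofReal_mul hc₀ fun γ hγ hg => ?_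
  calc ∫⁻ y, ENNReal.ofReal (φ (f y / (c * γ))) ∂μ
      ≤ ∫⁻ y, (ENNReal.ofReal c)⁻¹ * ENNReal.ofReal (φ (f y / γ)) ∂μ := by
        refine lintegral_mono fun y => ?_
        rw [mul_comm c γ, ← div_div, ← ENNReal.div_eq_inv_mul, ← ENNReal.ofReal_div_of_pos hc₀]
        exact ENNReal.ofReal_le_ofReal (map_div_le_div_of_convex hφ hzero hc _)
    _ = (ENNReal.ofReal c)⁻¹ * ∫⁻ y, ENNReal.ofReal (φ (f y / γ)) ∂μ :=
        lintegral_const_mul' _ _ (by simpa using hc₀)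
    _ ≤ ∫⁻ z, ENNReal.ofReal (φ (g z / γ)) ∂ν := by
        rw [← ENNReal.div_eq_inv_mul]
        exact ENNReal.div_le_of_le_mul' (h γ hγ)
    _ ≤ 1 := hg

end LuxNorm

section Segment

variable {E F : Type*} [NormedAddCommGroup E] [NormedSpace ℝ E] [NormedAddCommGroup F]
  [NormedSpace ℝ F] {U : Set E} {x y : E}

theorem continuousOn_fderiv_comp_lineMap {f : E → F} (hU : IsOpen U) (hf : ContDiffOn ℝ 1 f U)
    (hxy : segment ℝ x y ⊆ U) :
    ContinuousOn (fun t : ℝ => fderiv ℝ f (lineMap x y t)) (Icc 0 1) :=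
  (hf.continuousOn_fderiv_of_isOpen hU le_rfl).comp lineMap_continuous.continuousOn
    (by rwa [segment_eq_image_lineMap, ← mapsTo_iff_image_subset] at hxy)

theorem norm_sub_le_integral_norm_fderiv {f : E → F} (hU : IsOpen U) (hf : ContDiffOn ℝ 1 f U)
    (hxy : segment ℝ x y ⊆ U) :
    ‖f y - f x‖ ≤ ∫ t in (0 : ℝ)..1, ‖y - x‖ * ‖fderiv ℝ f (lineMap x y t)‖ := by
  have hmem (t : ℝ) (ht : t ∈ Icc (0 : ℝ) 1) : lineMap x y t ∈ U :=
    hxy (lineMap_mem_segment ℝ x y ht)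
  have hderiv (t : ℝ) (ht : t ∈ Icc (0 : ℝ) 1) :
      HasDerivAt (fun t : ℝ => f (lineMap x y t)) (fderiv ℝ f (lineMap x y t) (y - x)) t :=
    ((hf.differentiableOn one_ne_zero).differentiableAt
      (hU.mem_nhds (hmem t ht))).hasFDerivAt.comp_hasDerivAt t hasDerivAt_lineMap
  have hbound (t : ℝ) (ht : t ∈ Ioo (0 : ℝ) 1) :
      ‖deriv (fun t : ℝ => f (lineMap x y t)) t‖ ≤ ‖y - x‖ * ‖fderiv ℝ f (lineMap x y t)‖ := by
    rw [(hderiv t (Ioo_subset_Icc_self ht)).deriv, mul_comm]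
    exact (fderiv ℝ f (lineMap x y t)).le_opNorm (y - x)
  have hint : IntervalIntegrable (fun t => ‖y - x‖ * ‖fderiv ℝ f (lineMap x y t)‖) volume 0 1 :=
    (continuousOn_const.mul
      (continuousOn_fderiv_comp_lineMap hU hf hxy).norm).intervalIntegrable_of_Icc zero_le_one
  simpa using norm_sub_le_integral_of_norm_deriv_le_of_le zero_le_one
    (fun t ht => (hderiv t ht).continuousAt.continuousWithinAt)
    (fun t ht => (hderiv t (Ioo_subset_Icc_self ht)).differentiableAt.differentiableWithinAt)
    (.of_forall hbound) hint

theorem ofReal_map_sub_le_lintegral_fderiv {φ : ℝ → ℝ} (hφ : ConvexOn ℝ univ φ)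
    (heven : Function.Even φ) (hzero : φ 0 = 0) {f : E → ℝ} (hU : IsOpen U)
    (hf : ContDiffOn ℝ 1 f U) (hxy : segment ℝ x y ⊆ U) {d : ℝ} (hd : dist x y ≤ d) :
    ENNReal.ofReal (φ (f y - f x)) ≤
      ∫⁻ t in Icc (0 : ℝ) 1, ENNReal.ofReal (φ (d * ‖fderiv ℝ f (lineMap x y t)‖)) := by
  have hφ₀ := nonneg_of_even_convex hφ heven hzero
  have : IsProbabilityMeasure (volume.restrict (Icc (0 : ℝ) 1)) := ⟨by simp⟩
  have hcont := (continuousOn_fderiv_comp_lineMap hU hf hxy).norm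
  have hint (c : ℝ) : IntegrableOn (fun t => c * ‖fderiv ℝ f (lineMap x y t)‖) (Icc (0 : ℝ) 1) :=
    (continuousOn_const.mul hcont).integrableOn_Icc
  have hmean : |f y - f x| ≤ |⨍ t in Icc (0 : ℝ) 1, d * ‖fderiv ℝ f (lineMap x y t)‖| := by
    rw [average_eq_integral]
    calc |f y - f x| ≤ ∫ t in Icc (0 : ℝ) 1, ‖y - x‖ * ‖fderiv ℝ f (lineMap x y t)‖ := by
          rw [integral_Icc_eq_integral_Ioc, ← intervalIntegral.integral_of_le zero_le_one]
          exact norm_sub_le_integral_norm_fderiv hU hf hxy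
      _ ≤ ∫ t in Icc (0 : ℝ) 1, d * ‖fderiv ℝ f (lineMap x y t)‖ := by
          refine integral_mono (hint _) (hint _) fun t => ?_
          rw [dist_comm, dist_eq_norm] at hd
          exact mul_le_mul_of_nonneg_right hd (norm_nonneg _)
      _ ≤ |∫ t in Icc (0 : ℝ) 1, d * ‖fderiv ℝ f (lineMap x y t)‖| := le_abs_self _
  calc ENNReal.ofReal (φ (f y - f x))
      ≤ ENNReal.ofReal (φ (⨍ t in Icc (0 : ℝ) 1, d * ‖fderiv ℝ f (lineMap x y t)‖)) :=
        ENNReal.ofReal_le_ofReal (le_of_abs_le_of_even_convex hφ heven hmean)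
    _ ≤ ⨍⁻ t in Icc (0 : ℝ) 1, ENNReal.ofReal (φ (d * ‖fderiv ℝ f (lineMap x y t)‖)) ∂volume :=
        ofReal_map_average_le_laverage hφ hφ₀ (hint d)
    _ = ∫⁻ t in Icc (0 : ℝ) 1, ENNReal.ofReal (φ (d * ‖fderiv ℝ f (lineMap x y t)‖)) :=
        laverage_eq_lintegral _ _

end Segment

section Haar

variable {E : Type*} [NormedAddCommGroup E] [NormedSpace ℝ E] [FiniteDimensional ℝ E]
  [MeasurableSpace E] [BorelSpace E] {μ : Measure E} [μ.IsAddHaarMeasure]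

theorem lintegral_comp_lineMap {g : E → ℝ≥0∞} (hg : Measurable g) (x : E) {t : ℝ} (ht : t ≠ 0) :
    ∫⁻ y, g (lineMap x y t) ∂μ = ENNReal.ofReal |(t ^ finrank ℝ E)⁻¹| * ∫⁻ z, g z ∂μ := by
  calc ∫⁻ y, g (lineMap x y t) ∂μ = ∫⁻ y, g (t • y + (1 - t) • x) ∂μ := by
        simp only [lineMap_apply_module, add_comm]
    _ = ∫⁻ y, g (y + (1 - t) • x) ∂(μ.map (t • ·)) := by
        rw [lintegral_map (by fun_prop) (by fun_prop)]
    _ = ENNReal.ofReal |(t ^ finrank ℝ E)⁻¹| * ∫⁻ z, g z ∂μ := by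
        rw [Measure.map_addHaar_smul μ ht, lintegral_smul_measure,
          lintegral_add_right_eq_self g, smul_eq_mul]

theorem lintegral_comp_lineMap_le {g : E → ℝ≥0∞} (hg : Measurable g) (x : E) {t : ℝ}
    (ht : 1 / 2 ≤ t) :
    ∫⁻ y, g (lineMap x y t) ∂μ ≤ 2 ^ finrank ℝ E * ∫⁻ z, g z ∂μ := by
  have ht₀ : 0 < t := by linarith
  have hinv : t⁻¹ ≤ 2 := by simpa using inv_anti₀ (by norm_num) ht
  rw [lintegral_comp_lineMap hg x ht₀.ne', abs_of_pos (by positivity), ← inv_pow,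
    ENNReal.ofReal_pow (by positivity)]
  gcongr
  simpa using ENNReal.ofReal_le_ofReal hinv

theorem setLIntegral_setLIntegral_comp_lineMap_le {g : E → ℝ≥0∞} (hg : Measurable g) (U : Set E)
    (t : ℝ) :
    ∫⁻ y in U, ∫⁻ x in U, g (lineMap x y t) ∂μ ∂μ ≤
      2 ^ finrank ℝ E * μ U * ∫⁻ z, g z ∂μ := by
  have hhalf {t : ℝ} (ht : 1 / 2 ≤ t) : ∫⁻ x in U, ∫⁻ y in U, g (lineMap x y t) ∂μ ∂μ ≤
      2 ^ finrank ℝ E * μ U * ∫⁻ z, g z ∂μ :=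
    calc ∫⁻ x in U, ∫⁻ y in U, g (lineMap x y t) ∂μ ∂μ
        ≤ ∫⁻ _ in U, 2 ^ finrank ℝ E * ∫⁻ z, g z ∂μ ∂μ := lintegral_mono fun x =>
          (setLIntegral_le_lintegral _ _).trans (lintegral_comp_lineMap_le hg x ht)
      _ = 2 ^ finrank ℝ E * μ U * ∫⁻ z, g z ∂μ := by rw [setLIntegral_const]; ring
  rcases le_total (1 / 2) t with ht | ht
  · rw [lintegral_lintegral_swap (by unfold Function.uncurry; fun_prop)]
    exact hhalf ht
  · simp only [← lineMap_apply_one_sub _ _ t]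
    exact hhalf (by linarith)

theorem setLIntegral_lintegral_segment_le {g : E → ℝ≥0∞} (hg : Measurable g) (U : Set E) :
    ∫⁻ y in U, ∫⁻ x in U, (∫⁻ t in Icc (0 : ℝ) 1, g (lineMap x y t)) ∂μ ∂μ ≤
      2 ^ finrank ℝ E * μ U * ∫⁻ z, g z ∂μ := by
  have hmeas : Measurable fun p : (E × ℝ) × E => g (lineMap p.2 p.1.1 p.1.2) := by fun_prop
  calc ∫⁻ y in U, ∫⁻ x in U, (∫⁻ t in Icc (0 : ℝ) 1, g (lineMap x y t)) ∂μ ∂μ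
      = ∫⁻ y in U, (∫⁻ t in Icc (0 : ℝ) 1, ∫⁻ x in U, g (lineMap x y t) ∂μ) ∂μ :=
        lintegral_congr fun y => lintegral_lintegral_swap (by unfold Function.uncurry; fun_prop)
    _ = ∫⁻ t in Icc (0 : ℝ) 1, ∫⁻ y in U, ∫⁻ x in U, g (lineMap x y t) ∂μ ∂μ :=
        lintegral_lintegral_swap hmeas.lintegral_prod_right'.aemeasurable
    _ ≤ ∫⁻ _ in Icc (0 : ℝ) 1, (2 ^ finrank ℝ E * μ U * ∫⁻ z, g z ∂μ) :=
        lintegral_mono fun t => setLIntegral_setLIntegral_comp_lineMap_le hg U t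
    _ = 2 ^ finrank ℝ E * μ U * ∫⁻ z, g z ∂μ := by simp

end Haar

section Poincare

variable {E : Type*} [NormedAddCommGroup E] [NormedSpace ℝ E] [FiniteDimensional ℝ E]
  [MeasurableSpace E] [BorelSpace E] {μ : Measure E} [μ.IsAddHaarMeasure] {φ : ℝ → ℝ}
  {U A : Set E} {f : E → ℝ} {d : ℝ}

theorem setLIntegral_map_sub_setAverage_le (hφ : ConvexOn ℝ univ φ) (heven : Function.Even φ)
    (hzero : φ 0 = 0) (hU : IsOpen U) (hUconv : Convex ℝ U) (hd : ∀ x ∈ U, ∀ y ∈ U, dist x y ≤ d)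
    (hAU : A ⊆ U) (hA : MeasurableSet A) (hA₀ : μ A ≠ 0) (hA_top : μ A ≠ ∞)
    (hf : ContDiffOn ℝ 1 f U) (hfA : IntegrableOn f A μ) :
    ∫⁻ y in U, ENNReal.ofReal (φ (f y - ⨍ x in A, f x ∂μ)) ∂μ ≤
      2 ^ finrank ℝ E * (μ U / μ A) *
        ∫⁻ y in U, ENNReal.ofReal (φ (d * ‖fderiv ℝ f y‖)) ∂μ := by
  have hφcont : Continuous φ := continuousOn_univ.1 (hφ.continuousOn isOpen_univ)
  set g : E → ℝ≥0∞ := U.indicator fun z => ENNReal.ofReal (φ (d * ‖fderiv ℝ f z‖))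
  have hg : Measurable g :=
    (hφcont.measurable.comp ((measurable_fderiv ℝ f).norm.const_mul d)).ennreal_ofReal.indicator
      hU.measurableSet
  have hsegment {x y : E} (hx : x ∈ U) (hy : y ∈ U) :
      ENNReal.ofReal (φ (f y - f x)) ≤ ∫⁻ t in Icc (0 : ℝ) 1, g (lineMap x y t) := by
    refine (ofReal_map_sub_le_lintegral_fderiv hφ heven hzero hU hf
      (hUconv.segment_subset hx hy) (hd x hx y hy)).trans_eq ?_
    refine setLIntegral_congr_fun measurableSet_Icc fun t ht => ?_
    simp only [g, indicator_of_mem (hUconv.lineMap_mem hx hy ht)]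
  calc ∫⁻ y in U, ENNReal.ofReal (φ (f y - ⨍ x in A, f x ∂μ)) ∂μ
      ≤ ∫⁻ y in U, (μ A)⁻¹ * ∫⁻ x in A, ENNReal.ofReal (φ (f y - f x)) ∂μ ∂μ :=
        lintegral_mono fun y => ofReal_map_sub_setAverage_le hφ
          (nonneg_of_even_convex hφ heven hzero) hA₀ hA_top hfA (f y)
    _ = (μ A)⁻¹ * ∫⁻ y in U, ∫⁻ x in A, ENNReal.ofReal (φ (f y - f x)) ∂μ ∂μ :=
        lintegral_const_mul' _ _ (ENNReal.inv_ne_top.2 hA₀)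
    _ ≤ (μ A)⁻¹ * ∫⁻ y in U, ∫⁻ x in A, (∫⁻ t in Icc (0 : ℝ) 1, g (lineMap x y t)) ∂μ ∂μ := by
        gcongr 1
        exact setLIntegral_mono' hU.measurableSet fun y hy =>
          setLIntegral_mono' hA fun x hx => hsegment (hAU hx) hy
    _ ≤ (μ A)⁻¹ * ∫⁻ y in U, ∫⁻ x in U, (∫⁻ t in Icc (0 : ℝ) 1, g (lineMap x y t)) ∂μ ∂μ := by
        gcongr
    _ ≤ (μ A)⁻¹ * (2 ^ finrank ℝ E * μ U * ∫⁻ z, g z ∂μ) := by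
        gcongr
        exact setLIntegral_lintegral_segment_le hg U
    _ = 2 ^ finrank ℝ E * (μ U / μ A) *
          ∫⁻ y in U, ENNReal.ofReal (φ (d * ‖fderiv ℝ f y‖)) ∂μ := by
        rw [lintegral_indicator hU.measurableSet, div_eq_mul_inv]
        ring

theorem orlicz_poincare_unit_ball_general (hφ : ConvexOn ℝ univ φ) (heven : Function.Even φ)
    (hzero : φ 0 = 0) (hU : IsOpen U) (hUconv : Convex ℝ U) (hd₀ : 0 < d)
    (hd : ∀ x ∈ U, ∀ y ∈ U, dist x y ≤ d) (hAU : A ⊆ U) (hA : MeasurableSet A) (hA₀ : μ A ≠ 0)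
    (hf : ContDiffOn ℝ 1 f U) (hfA : IntegrableOn f A μ) :
    luxNorm (μ.restrict U) φ (fun y => f y - ⨍ x in A, f x ∂μ) ≤
      ENNReal.ofReal (2 ^ finrank ℝ E * (μ.real U / μ.real A) * d) *
        luxNorm (μ.restrict U) φ (fun y => ‖fderiv ℝ f y‖) := by
  have hU_top : μ U ≠ ∞ :=
    (Metric.isBounded_iff.2 ⟨d, fun x hx y hy => hd x hx y hy⟩).measure_lt_top.ne
  have hA_top : μ A ≠ ∞ := measure_ne_top_of_subset hAU hU_top
  have hA_pos : 0 < μ.real A := ENNReal.toReal_pos hA₀ hA_top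
  set K : ℝ := 2 ^ finrank ℝ E * (μ.real U / μ.real A)
  have hK : 1 ≤ K := one_le_mul_of_one_le_of_one_le (one_le_pow₀ one_le_two)
    ((one_le_div hA_pos).2 (measureReal_mono hAU hU_top))
  have hK_ofReal : ENNReal.ofReal K = 2 ^ finrank ℝ E * (μ U / μ A) := by
    rw [ENNReal.ofReal_mul (by positivity), ENNReal.ofReal_div_of_pos hA_pos,
      ofReal_measureReal hU_top, ofReal_measureReal hA_top, ENNReal.ofReal_pow zero_le_two,
      ENNReal.ofReal_ofNat]
  have hmodular (γ : ℝ) :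
      ∫⁻ y in U, ENNReal.ofReal (φ ((f y - ⨍ x in A, f x ∂μ) / γ)) ∂μ ≤
        ENNReal.ofReal K * ∫⁻ y in U, ENNReal.ofReal (φ (d * ‖fderiv ℝ f y‖ / γ)) ∂μ := by
    have hφγ : ConvexOn ℝ univ fun t => φ (t / γ) := by
      simpa [Function.comp_def, div_eq_inv_mul] using hφ.comp_linearMap (LinearMap.mulLeft ℝ γ⁻¹)
    have hevenγ : Function.Even fun t => φ (t / γ) := fun t => by simp only [neg_div, heven _]
    rw [hK_ofReal]
    exact setLIntegral_map_sub_setAverage_le hφγ hevenγ (by simpa using hzero) hU hUconv hd hAU hA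
      hA₀ hA_top hf hfA
  calc luxNorm (μ.restrict U) φ (fun y => f y - ⨍ x in A, f x ∂μ)
      ≤ ENNReal.ofReal K * luxNorm (μ.restrict U) φ (fun y => d * ‖fderiv ℝ f y‖) :=
        luxNorm_le_ofReal_mul_of_lintegral_le hφ hzero.le hK fun γ _ => hmodular γ
    _ ≤ ENNReal.ofReal K * (ENNReal.ofReal d *
          luxNorm (μ.restrict U) φ (fun y => ‖fderiv ℝ f y‖)) := by
        gcongr
        exact luxNorm_const_mul_le hd₀
    _ = ENNReal.ofReal (K * d) * luxNorm (μ.restrict U) φ (fun y => ‖fderiv ℝ f y‖) := by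
        rw [← mul_assoc, ← ENNReal.ofReal_mul (by positivity)]

theorem orlicz_poincare_ball (hφ : ConvexOn ℝ univ φ) (heven : Function.Even φ)
    (hzero : φ 0 = 0) {c : E} {r R : ℝ} (hr : 0 < r) (hrR : r < R)
    (hf : ContDiffOn ℝ 1 f (Metric.ball c R)) :
    luxNorm (μ.restrict (Metric.ball c R)) φ (fun y => f y - ⨍ x in Metric.ball c r, f x ∂μ) ≤
      ENNReal.ofReal ((2 * R / r) ^ finrank ℝ E * (2 * R)) *
        luxNorm (μ.restrict (Metric.ball c R)) φ (fun y => ‖fderiv ℝ f y‖) := by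
  have hR : 0 < R := hr.trans hrR
  have hdist (x : E) (hx : x ∈ Metric.ball c R) (y : E) (hy : y ∈ Metric.ball c R) :
      dist x y ≤ 2 * R := by
    linarith [dist_triangle_right x y c, Metric.mem_ball.1 hx, Metric.mem_ball.1 hy]
  have hint : IntegrableOn f (Metric.ball c r) μ :=
    ((hf.continuousOn.mono (Metric.closedBall_subset_ball hrR)).integrableOn_compact
      (isCompact_closedBall c r)).mono_set Metric.ball_subset_closedBall
  have hratio : 2 ^ finrank ℝ E * (μ.real (Metric.ball c R) / μ.real (Metric.ball c r)) =
      (2 * R / r) ^ finrank ℝ E := by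
    have hunit : μ.real (Metric.ball 0 1) ≠ 0 :=
      (ENNReal.toReal_pos (Metric.measure_ball_pos μ 0 one_pos).ne' measure_ball_lt_top.ne).ne'
    have hball {s : ℝ} (hs : 0 < s) :
        μ.real (Metric.ball c s) = s ^ finrank ℝ E * μ.real (Metric.ball 0 1) := by
      rw [measureReal_def, measureReal_def, Measure.addHaar_ball_of_pos μ c hs, ENNReal.toReal_mul,
        ENNReal.toReal_ofReal (by positivity)]
    rw [hball hR, hball hr, mul_div_mul_right _ _ hunit, ← div_pow, ← mul_pow, mul_div_assoc]
  rw [← hratio]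
  exact orlicz_poincare_unit_ball_general hφ heven hzero Metric.isOpen_ball (convex_ball c R)
    (by positivity) hdist (Metric.ball_subset_ball hrR.le) measurableSet_ball
    (Metric.measure_ball_pos μ c hr).ne' hf hint

end Poincare

/-- the Orlicz–Poincaré inequality on the unit ball `B ⊆ ℝⁿ`: there is a
constant `C > 0` depending only on `n` such that for every Young function `φ` and every
`C¹` function `f` on `B`,
`‖f − (1/Vol(½B)) ∫_{½B} f‖_{L^φ(B)} ≤ C · ‖ y ↦ ‖Df(y)‖ ‖_{L^φ(B)}`. -/
theorem orlicz_poincare_unit_ball (n : ℕ) (hn : 1 ≤ n) :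
    ∃ C : ℝ, 0 < C ∧
      ∀ φ : ℝ → ℝ, IsYoung φ →
        ∀ f : EuclideanSpace ℝ (Fin n) → ℝ,
          ContDiffOn ℝ 1 f (Metric.ball (0 : EuclideanSpace ℝ (Fin n)) 1) →
          luxNorm (volume.restrict (Metric.ball (0 : EuclideanSpace ℝ (Fin n)) 1)) φ
              (fun y => f y -
                (volume (Metric.ball (0 : EuclideanSpace ℝ (Fin n)) (1 / 2))).toReal⁻¹ *
                  ∫ x in Metric.ball (0 : EuclideanSpace ℝ (Fin n)) (1 / 2), f x) ≤
            ENNReal.ofReal C *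
              luxNorm (volume.restrict (Metric.ball (0 : EuclideanSpace ℝ (Fin n)) 1)) φ
                (fun y => ‖fderiv ℝ f y‖) := by
  refine ⟨(2 * 1 / (1 / 2)) ^ n * (2 * 1), by positivity, fun φ ⟨heven, hφ, _, hzero⟩ f hf => ?_⟩
  simpa only [setAverage_eq, smul_eq_mul, Measure.real, finrank_euclideanSpace_fin] using
    orlicz_poincare_ball hφ heven ((hzero 0).2 rfl) one_half_pos one_half_lt_one hf
end

section
/- Let G be a topological group with measurable multiplication, and let μ be a nonzero left-invariant Borel measure on G. Let K ⊆ G, let M > 0, and let κ : G → [0,∞) be measurable with κ ≤ M and κ = 0 outside K. Let U ⊆ G be measurable with 0 < μ(U) < ∞, let φ be a Young function, and let s > 0 satisfy μ(U)·φ(s) ≤ 1. Then for every measurable f : G → ℝ, the function g(x) = ∫_G |f(x·z)|·κ(z) dμ(z) satisfies ‖g·𝟙_U‖_{L^φ(μ)} ≤ (M/s)·∫_{U·K} |f| dμ, where U·K = {x·z : x ∈ U, z ∈ K} and ‖·‖_{L^φ(μ)} is the Luxembourg norm with respect to μ. -/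
open MeasureTheory
open scoped ENNReal Pointwise

/-- The Luxembourg norm of a `[0,∞]`-valued function (`φ(f/γ) = ∞` where `f = ∞`). -/
noncomputable def luxNormENN {Z : Type*} [MeasurableSpace Z] (μ : Measure Z) (φ : ℝ → ℝ)
    (f : Z → ℝ≥0∞) : ℝ≥0∞ :=
  sInf (ENNReal.ofReal ''
    {γ : ℝ | 0 < γ ∧
      ∫⁻ z, (if f z = ⊤ then ⊤ else ENNReal.ofReal (φ ((f z).toReal / γ))) ∂μ ≤ 1})

/-!
For `x ∈ U`, left invariance turns the integral over `K` defining `g x` into one over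
`x • K ⊆ U * K`, so `g ≤ c := M * ∫_{U * K} |f|` throughout `U`. The Luxembourg norm is monotone,
and `μ U * φ s ≤ 1` says that `c / s` is an admissible scale for the constant `c` on `U`.
-/

section Orlicz

variable {Z : Type*} [MeasurableSpace Z] {μ : Measure Z} {φ : ℝ → ℝ}

/-- The Orlicz modular `∫ φ(f/γ) dμ` of a `[0,∞]`-valued function at scale `γ`, with the convention
`φ(∞/γ) = ∞`; the Luxembourg norm is the infimum of the scales at which it is at most `1`. -/
noncomputable def orliczModular (μ : Measure Z) (φ : ℝ → ℝ) (γ : ℝ) (f : Z → ℝ≥0∞) : ℝ≥0∞ :=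
  ∫⁻ z, (if f z = ⊤ then ⊤ else ENNReal.ofReal (φ ((f z).toReal / γ))) ∂μ

theorem IsYoung.map_zero_s11 (hφ : IsYoung φ) : φ 0 = 0 :=
  (hφ.2.2.2 0).2 rfl

theorem IsYoung.monotoneOn (hφ : IsYoung φ) : MonotoneOn φ (Set.Ici 0) := by
  intro a ha b _ hab
  rcases (Set.mem_Ici.1 ha).eq_or_lt with rfl | ha_pos
  · exact hφ.map_zero_s11.trans_le (hφ.2.2.1 b)
  · exact hφ.2.1.le_right_of_left_le'' (Set.mem_univ 0) (Set.mem_univ b) ha_pos hab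
      (hφ.map_zero_s11.trans_le (hφ.2.2.1 a))

theorem orliczModular_mono (hφ : MonotoneOn φ (Set.Ici 0)) {γ : ℝ} (hγ : 0 ≤ γ)
    {f g : Z → ℝ≥0∞} (hfg : f ≤ g) : orliczModular μ φ γ f ≤ orliczModular μ φ γ g := by
  refine lintegral_mono fun z => ?_
  by_cases hg : g z = ⊤
  · simp only [hg, if_true, le_top]
  · have hf : f z ≠ ⊤ := ne_top_of_le_ne_top hg (hfg z)
    simp only [hf, hg, if_false]
    have hscaled : (f z).toReal / γ ≤ (g z).toReal / γ :=
      div_le_div_of_nonneg_right (ENNReal.toReal_mono hg (hfg z)) hγ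
    exact ENNReal.ofReal_le_ofReal
      (hφ (Set.mem_Ici.2 (by positivity)) (Set.mem_Ici.2 (by positivity)) hscaled)

theorem luxNormENN_mono (hφ : MonotoneOn φ (Set.Ici 0)) {f g : Z → ℝ≥0∞} (hfg : f ≤ g) :
    luxNormENN μ φ f ≤ luxNormENN μ φ g :=
  sInf_le_sInf <| Set.image_mono fun _ hγ =>
    ⟨hγ.1, (orliczModular_mono hφ hγ.1.le hfg).trans hγ.2⟩

theorem luxNormENN_le_of_orliczModular_le_one {f : Z → ℝ≥0∞} {r : ℝ≥0∞} (hr : r ≠ 0)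
    (hf : orliczModular μ φ r.toReal f ≤ 1) : luxNormENN μ φ f ≤ r := by
  rcases eq_or_ne r ⊤ with rfl | hr_top
  · exact le_top
  · exact sInf_le ⟨r.toReal, ⟨ENNReal.toReal_pos hr hr_top, hf⟩, ENNReal.ofReal_toReal hr_top⟩

theorem orliczModular_indicator_const_le (hφ : φ 0 = 0) (U : Set Z) {c : ℝ≥0∞} (hc : c ≠ ⊤)
    (γ : ℝ) :
    orliczModular μ φ γ (U.indicator fun _ => c) ≤
      μ U * ENNReal.ofReal (φ (c.toReal / γ)) := by
  calc orliczModular μ φ γ (U.indicator fun _ => c)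
      = ∫⁻ z, U.indicator (fun _ => ENNReal.ofReal (φ (c.toReal / γ))) z ∂μ := by
        refine lintegral_congr fun z => ?_
        by_cases hz : z ∈ U <;> simp [hz, hc, hφ]
    _ ≤ μ U * ENNReal.ofReal (φ (c.toReal / γ)) := by
        rw [mul_comm]
        exact lintegral_indicator_const_le U _

theorem luxNormENN_indicator_const_le (hφ₀ : φ 0 = 0) (hφ : MonotoneOn φ (Set.Ici 0))
    {U : Set Z} {s : ℝ} (hs : 0 < s) (hsφ : μ U * ENNReal.ofReal (φ s) ≤ 1) (c : ℝ≥0∞) :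
    luxNormENN μ φ (U.indicator fun _ => c) ≤ c / ENNReal.ofReal s := by
  -- For `c = 0` the scale `c / s` itself is not admissible, so every larger scale is tested.
  refine le_of_forall_gt_imp_ge_of_dense fun r hr => ?_
  rcases eq_or_ne r ⊤ with rfl | hr_top
  · exact le_top
  have hr_ne : r ≠ 0 := (zero_le.trans_lt hr).ne'
  have hcrs : c < r * ENNReal.ofReal s :=
    (ENNReal.div_lt_iff (.inl (ENNReal.ofReal_pos.2 hs).ne') (.inl ENNReal.ofReal_ne_top)).1 hr
  have hscaled : c.toReal / r.toReal ≤ s := by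
    rw [div_le_iff₀' (ENNReal.toReal_pos hr_ne hr_top)]
    simpa only [ENNReal.toReal_mul, ENNReal.toReal_ofReal hs.le] using
      ENNReal.toReal_mono (ENNReal.mul_ne_top hr_top ENNReal.ofReal_ne_top) hcrs.le
  refine luxNormENN_le_of_orliczModular_le_one hr_ne ?_
  calc orliczModular μ φ r.toReal (U.indicator fun _ => c)
      ≤ μ U * ENNReal.ofReal (φ (c.toReal / r.toReal)) :=
        orliczModular_indicator_const_le hφ₀ U hcrs.ne_top _
    _ ≤ μ U * ENNReal.ofReal (φ s) := by
        gcongr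
        exact hφ (Set.mem_Ici.2 (by positivity)) (Set.mem_Ici.2 hs.le) hscaled
    _ ≤ 1 := hsφ

end Orlicz

section Convolution

variable {G : Type*} [Group G] [MeasurableSpace G] [MeasurableMul G]
  (μ : Measure G) [μ.IsMulLeftInvariant]

theorem lintegral_translate_mul_le_setLIntegral_smul {K : Set G} {M : ℝ≥0∞} (hM : M ≠ ⊤)
    {κ : G → ℝ≥0∞} (hκM : ∀ z, κ z ≤ M) (hκK : ∀ z ∉ K, κ z = 0)
    (f : G → ℝ≥0∞) (x : G) :
    ∫⁻ z, f (x * z) * κ z ∂μ ≤ M * ∫⁻ y in x • K, f y ∂μ := by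
  calc ∫⁻ z, f (x * z) * κ z ∂μ
      ≤ ∫⁻ z, M * (x • K).indicator f (x * z) ∂μ := by
        refine lintegral_mono fun z => ?_
        by_cases hz : z ∈ K
        · have hxz : x * z ∈ x • K := Set.smul_mem_smul_set hz
          rw [Set.indicator_of_mem hxz, mul_comm]
          gcongr
          exact hκM z
        · simp only [hκK z hz, mul_zero, zero_le]
    _ = M * ∫⁻ z, (x • K).indicator f (x * z) ∂μ :=
        lintegral_const_mul' _ _ hM
    _ = M * ∫⁻ y, (x • K).indicator f y ∂μ := by rw [lintegral_mul_left_eq_self]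
    _ ≤ M * ∫⁻ y in x • K, f y ∂μ := mul_right_mono (lintegral_indicator_le f _)

theorem local_convolution_luxNorm_bound_general {K : Set G} {M : ℝ≥0∞} (hM : M ≠ ⊤)
    {κ : G → ℝ≥0∞} (hκM : ∀ z, κ z ≤ M) (hκK : ∀ z ∉ K, κ z = 0)
    {U : Set G} {φ : ℝ → ℝ} (hφ₀ : φ 0 = 0) (hφ : MonotoneOn φ (Set.Ici 0))
    {s : ℝ} (hs : 0 < s) (hsφ : μ U * ENNReal.ofReal (φ s) ≤ 1) (f : G → ℝ≥0∞) :
    luxNormENN μ φ (U.indicator fun x => ∫⁻ z, f (x * z) * κ z ∂μ) ≤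
      M / ENNReal.ofReal s * ∫⁻ x in U * K, f x ∂μ := by
  have hbound : ∀ x ∈ U, ∫⁻ z, f (x * z) * κ z ∂μ ≤ M * ∫⁻ y in U * K, f y ∂μ := fun x hx =>
    (lintegral_translate_mul_le_setLIntegral_smul μ hM hκM hκK f x).trans <| by
      gcongr
      exact Set.smul_set_subset_mul hx
  calc luxNormENN μ φ (U.indicator fun x => ∫⁻ z, f (x * z) * κ z ∂μ)
      ≤ luxNormENN μ φ (U.indicator fun _ => M * ∫⁻ y in U * K, f y ∂μ) :=
        luxNormENN_mono hφ (fun x => Set.indicator_le_indicator' (hbound x))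
    _ ≤ (M * ∫⁻ y in U * K, f y ∂μ) / ENNReal.ofReal s :=
        luxNormENN_indicator_const_le hφ₀ hφ hs hsφ _
    _ = M / ENNReal.ofReal s * ∫⁻ y in U * K, f y ∂μ := ENNReal.mul_div_right_comm

end Convolution

/-- for a kernel `κ ≤ M` supported in `K`, the convolution
`g(x) = ∫ |f(x·z)| κ(z) dμ(z)` restricted to a set `U` of finite positive measure
satisfies `‖g·𝟙_U‖_{L^φ(μ)} ≤ (M/s)·∫_{U·K} |f| dμ` whenever `s > 0` and
`μ(U)·φ(s) ≤ 1`. -/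
theorem local_convolution_luxNorm_bound {G : Type*} [Group G] [TopologicalSpace G]
    [IsTopologicalGroup G] [MeasurableSpace G] [BorelSpace G] [MeasurableMul₂ G]
    (μ : Measure G) [μ.IsMulLeftInvariant] (hμ : μ ≠ 0)
    (K : Set G) (M : ℝ) (hM : 0 < M)
    (κ : G → ℝ) (hκmeas : Measurable κ) (hκ0 : ∀ z, 0 ≤ κ z)
    (hκM : ∀ z, κ z ≤ M) (hκK : ∀ z ∉ K, κ z = 0)
    (U : Set G) (hUmeas : MeasurableSet U) (hUpos : 0 < μ U) (hUfin : μ U < ⊤)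
    (φ : ℝ → ℝ) (hφ : IsYoung φ)
    (s : ℝ) (hs : 0 < s) (hsφ : μ U * ENNReal.ofReal (φ s) ≤ 1)
    (f : G → ℝ) (hf : Measurable f) :
    luxNormENN μ φ
        (U.indicator fun x => ∫⁻ z, ENNReal.ofReal (|f (x * z)| * κ z) ∂μ) ≤
      ENNReal.ofReal (M / s) * ∫⁻ x in U * K, ENNReal.ofReal |f x| ∂μ := by
  simpa only [ENNReal.ofReal_mul (abs_nonneg _), ENNReal.ofReal_div_of_pos hs] using
    local_convolution_luxNorm_bound_general μ ENNReal.ofReal_ne_top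
      (fun z => ENNReal.ofReal_le_ofReal (hκM z))
      (fun z hz => ENNReal.ofReal_eq_zero.2 (hκK z hz).le)
      hφ.map_zero_s11 hφ.monotoneOn hs hsφ fun x => ENNReal.ofReal |f x|
end

section
/- Let p > 1, κ > 0 and ε ∈ (0, 1/8) be real numbers, and define φ = φ_{p,κ} : ℝ → [0,∞) by φ(t) = |t|^p / (log(e + |t|⁻¹))^κ for t ≠ 0 and φ(0) = 0. Then there exists a measurable function f : ℝ → [0,∞) such that: (i) for every γ > 0, ∫_ℝ φ(f(t)/γ) dt = +∞ (so the Luxembourg norm of f with respect to Lebesgue measure on ℝ is infinite); and (ii) the function θ : ℤ → [0,∞] given by θ(n) = ‖f·𝟙_{(n−ε, n+1+ε)}‖_{L^φ(ℝ)} has finite Luxembourg norm ‖θ‖_{ℓ^φ(ℤ)} with respect to counting measure on ℤ. -/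
open MeasureTheory
open scoped ENNReal

/-- The Young function `φ_{p,κ}(t) = |t|^p / (log(e + |t|⁻¹))^κ` (with `φ_{p,κ}(0) = 0`). -/
noncomputable def phiPK (p κ t : ℝ) : ℝ :=
  if t = 0 then 0 else |t| ^ p / Real.log (Real.exp 1 + |t|⁻¹) ^ κ

/-! The function is the indicator of a union of intervals `A n`, one deep inside each `(n, n + 1)`,
of length comparable to `a n ^ p`. At height `1` only lengths matter, so the modular of `f / γ` over
`ℝ` is a positive multiple of `∑ a n ^ p`. Locally, `φ t ≤ |t| ^ p` makes the norm of the indicator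
of `A n` at most `a n`, and at the small values `a n` the logarithm in `φ` is effective. Taking
`a n ^ p = 1 / (n (1 + log n))` makes `∑ a n ^ p` diverge, whereas
`φ (a n) ≲ 1 / (n (1 + log n) ^ (1 + κ))` is summable. -/

section YoungFunction

open Real Set

variable {p κ t γ : ℝ}

theorem one_le_log_exp_one_add (ht : 0 ≤ t) : 1 ≤ log (exp 1 + t) := by
  rw [le_log_iff_exp_le (by positivity)]
  linarith

theorem phiPK_zero : phiPK p κ 0 = 0 := if_pos rfl

theorem phiPK_of_pos (ht : 0 < t) : phiPK p κ t = t ^ p / log (exp 1 + t⁻¹) ^ κ := by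
  rw [phiPK, if_neg ht.ne', abs_of_pos ht]

theorem phiPK_pos (ht : 0 < t) : 0 < phiPK p κ t := by
  have hlog := one_le_log_exp_one_add (inv_pos.2 ht).le
  rw [phiPK_of_pos ht]
  positivity

theorem phiPK_nonneg (ht : 0 ≤ t) : 0 ≤ phiPK p κ t := by
  rcases ht.eq_or_lt with rfl | ht
  exacts [phiPK_zero.ge, (phiPK_pos ht).le]

theorem phiPK_le_rpow (hκ : 0 ≤ κ) (ht : 0 < t) : phiPK p κ t ≤ t ^ p := by
  rw [phiPK_of_pos ht]
  exact div_le_self (by positivity)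
    (one_le_rpow (one_le_log_exp_one_add (inv_pos.2 ht).le) hκ)

theorem monotoneOn_phiPK (hp : 0 ≤ p) (hκ : 0 ≤ κ) : MonotoneOn (phiPK p κ) (Ici 0) := by
  intro s hs t ht hst
  rcases (mem_Ici.1 hs).eq_or_lt with rfl | hs
  · exact phiPK_zero.trans_le (phiPK_nonneg ht)
  · have ht : 0 < t := hs.trans_le hst
    have hlog := one_le_log_exp_one_add (inv_pos.2 ht).le
    rw [phiPK_of_pos hs, phiPK_of_pos ht]
    gcongr

theorem phiPK_div_le (hκ : 0 ≤ κ) (ht : 0 < t) (hγ : 1 ≤ γ) :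
    phiPK p κ (t / γ) ≤ phiPK p κ t / γ ^ p := by
  have hlog := one_le_log_exp_one_add (inv_pos.2 ht).le
  have hinv : t⁻¹ ≤ (t / γ)⁻¹ := inv_anti₀ (by positivity) (div_le_self ht.le hγ)
  rw [phiPK_of_pos ht, phiPK_of_pos (by positivity), div_rpow ht.le (by positivity),
    div_right_comm]
  gcongr

end YoungFunction

section Series

open Real

variable {p κ : ℝ}

/-- The term at `n = 0` is `1 / 0 = 0`. -/
theorem summable_one_div_nat_mul_one_add_log_rpow_iff {s : ℝ} (hs : 0 ≤ s) :
    Summable (fun n : ℕ ↦ 1 / (n * (1 + log n) ^ s)) ↔ 1 < s := by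
  have hlog2 : 0 < log 2 := log_pos one_lt_two
  have condensed (k : ℕ) : (2 : ℝ) ^ k * (1 / ((2 ^ k : ℕ) * (1 + log (2 ^ k : ℕ)) ^ s)) =
      (log 2 ^ s)⁻¹ * (1 / |k + (log 2)⁻¹| ^ s) := by
    have hsplit : 1 + log ((2 ^ k : ℕ) : ℝ) = log 2 * |k + (log 2)⁻¹| := by
      rw [abs_of_pos (by positivity), Nat.cast_pow, log_pow]
      push_cast
      field_simp
      ring
    rw [hsplit, mul_rpow hlog2.le (abs_nonneg _), Nat.cast_pow, Nat.cast_ofNat]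
    field_simp
  rw [← summable_condensed_iff_of_nonneg (fun n ↦ by positivity)]
  · simp_rw [condensed]
    rw [summable_mul_left_iff (by positivity), summable_one_div_nat_add_rpow]
  · intro m n hm hmn
    have : (0 : ℝ) < m := Nat.cast_pos.2 hm
    have : 0 ≤ log m := log_natCast_nonneg m
    gcongr

theorem one_add_log_le_mul_log_exp_one_add {x y : ℝ} (hp : 0 < p) (hx : 1 ≤ x) (hxy : x ≤ y) :
    1 + log x ≤ (1 + p) * log (exp 1 + y ^ p⁻¹) := by
  have hy : 0 < y := by linarith
  have hlog : p⁻¹ * log x ≤ log (exp 1 + y ^ p⁻¹) :=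
    calc p⁻¹ * log x ≤ p⁻¹ * log y := by gcongr
      _ = log (y ^ p⁻¹) := (log_rpow hy _).symm
      _ ≤ log (exp 1 + y ^ p⁻¹) :=
        log_le_log (by positivity) (le_add_of_nonneg_left (exp_pos 1).le)
  rw [inv_mul_le_iff₀ hp] at hlog
  linarith [one_le_log_exp_one_add (rpow_nonneg hy.le p⁻¹)]

theorem phiPK_rpow_neg_inv_le {x : ℝ} (hp : 0 < p) (hκ : 0 ≤ κ) (hx : 1 ≤ x) :
    phiPK p κ ((x * (1 + log x)) ^ (-p⁻¹)) ≤ (1 + p) ^ κ * (1 / (x * (1 + log x) ^ (1 + κ))) := by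
  have hlogx : 0 ≤ log x := log_nonneg hx
  set y := x * (1 + log x) with hy
  have hxy : x ≤ y := le_mul_of_one_le_right (by positivity) (by linarith)
  have hy0 : 0 < y := by positivity
  set L := log (exp 1 + y ^ p⁻¹)
  have hL : 1 ≤ L := one_le_log_exp_one_add (rpow_nonneg hy0.le p⁻¹)
  have hlogL : 1 + log x ≤ (1 + p) * L := one_add_log_le_mul_log_exp_one_add hp hx hxy
  calc phiPK p κ (y ^ (-p⁻¹))
      = y⁻¹ / L ^ κ := by
        rw [phiPK_of_pos (by positivity), ← rpow_mul hy0.le, neg_mul, inv_mul_cancel₀ hp.ne',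
          rpow_neg_one, ← rpow_neg hy0.le, neg_neg]
    _ = (1 + p) ^ κ * (y⁻¹ / ((1 + p) * L) ^ κ) := by
        rw [mul_rpow (by positivity) (by positivity)]
        field_simp
    _ ≤ (1 + p) ^ κ * (y⁻¹ / (1 + log x) ^ κ) := by gcongr
    _ = (1 + p) ^ κ * (1 / (x * (1 + log x) ^ (1 + κ))) := by
        rw [rpow_add (by positivity), rpow_one, hy]
        field_simp

theorem exists_not_summable_rpow_summable_phiPK (ι : Type*) [Denumerable ι]
    (hp : 0 < p) (hκ : 0 < κ) :
    ∃ a : ι → ℝ, (∀ i, 0 < a i) ∧ (∀ i, a i ≤ 1) ∧ ¬ Summable (fun i ↦ a i ^ p) ∧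
      Summable (fun i ↦ phiPK p κ (a i)) := by
  let b (n : ℕ) : ℝ := (n * (1 + log n)) ^ (-p⁻¹)
  have cast_ge (n : ℕ) : (1 : ℝ) ≤ (n + 1 : ℕ) := by simp
  have base_ge (n : ℕ) : (1 : ℝ) ≤ (n + 1 : ℕ) * (1 + log (n + 1 : ℕ)) :=
    one_le_mul_of_one_le_of_one_le (cast_ge n) (by linarith [log_nonneg (cast_ge n)])
  have b_rpow (n : ℕ) : b n ^ p = 1 / (n * (1 + log n) ^ (1 : ℝ)) := by
    have : 0 ≤ log n := log_natCast_nonneg n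
    rw [← rpow_mul (by positivity), neg_mul, inv_mul_cancel₀ hp.ne', rpow_neg_one, rpow_one,
      one_div]
  let e : ι ≃ ℕ := Denumerable.eqv ι
  refine ⟨fun i ↦ b (e i + 1), fun i ↦ rpow_pos_of_pos (by linarith [base_ge (e i)]) _,
    fun i ↦ rpow_le_one_of_one_le_of_nonpos (base_ge _) (by simpa using hp.le), ?_, ?_⟩
  · refine (e.summable_iff (f := fun n ↦ b (n + 1) ^ p)).not.2 ?_
    rw [summable_nat_add_iff (f := fun n ↦ b n ^ p) 1]
    simp_rw [b_rpow]
    exact (summable_one_div_nat_mul_one_add_log_rpow_iff zero_le_one).not.2 (lt_irrefl 1)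
  · refine (e.summable_iff (f := fun n ↦ phiPK p κ (b (n + 1)))).2 ?_
    have hbertrand := (summable_one_div_nat_mul_one_add_log_rpow_iff (s := 1 + κ)
      (by positivity)).2 (by linarith)
    exact .of_nonneg_of_le
      (fun n ↦ phiPK_nonneg (rpow_nonneg (by linarith [base_ge n]) _))
      (fun n ↦ phiPK_rpow_neg_inv_le hp hκ.le (cast_ge n))
      (((summable_nat_add_iff 1).2 hbertrand).mul_left _)

end Series

section LuxembourgNorm

open Real Set

variable {Z : Type*} [MeasurableSpace Z] {μ : Measure Z} {φ : ℝ → ℝ} {p κ γ : ℝ}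

theorem luxNorm_le_ofReal {f : Z → ℝ} (hγ : 0 < γ)
    (h : ∫⁻ z, ENNReal.ofReal (φ (f z / γ)) ∂μ ≤ 1) : luxNorm μ φ f ≤ ENNReal.ofReal γ :=
  sInf_le ⟨γ, ⟨hγ, h⟩, rfl⟩

theorem luxNormENN_le_luxNorm (hφ : MonotoneOn φ (Ici 0)) {θ : Z → ℝ≥0∞} {a : Z → ℝ}
    (ha : ∀ z, 0 ≤ a z) (hθ : ∀ z, θ z ≤ ENNReal.ofReal (a z)) :
    luxNormENN μ φ θ ≤ luxNorm μ φ a := by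
  refine sInf_le_sInf (image_mono fun γ ⟨hγ, hint⟩ ↦ ⟨hγ, ?_⟩)
  refine (lintegral_mono fun z ↦ ?_).trans hint
  have hθa : (θ z).toReal ≤ a z := ENNReal.toReal_le_of_le_ofReal (ha z) (hθ z)
  rw [if_neg (ne_top_of_le_ne_top ENNReal.ofReal_ne_top (hθ z))]
  have ha := ha z
  exact ENNReal.ofReal_le_ofReal (hφ (mem_Ici.2 (by positivity)) (mem_Ici.2 (by positivity))
    (by gcongr))

theorem lintegral_comp_indicator_one_div (hφ : φ 0 = 0) {S : Set Z} (hS : MeasurableSet S) :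
    ∫⁻ z, ENNReal.ofReal (φ (S.indicator 1 z / γ)) ∂μ = ENNReal.ofReal (φ γ⁻¹) * μ S := by
  rw [← lintegral_indicator_const hS]
  congr with z
  by_cases hz : z ∈ S <;> simp [hz, hφ]

theorem luxNorm_phiPK_indicator_one_le (hκ : 0 ≤ κ) {S : Set Z} (hS : MeasurableSet S)
    (hγ : 0 < γ) (hμS : μ S ≤ ENNReal.ofReal (γ ^ p)) :
    luxNorm μ (phiPK p κ) (S.indicator 1) ≤ ENNReal.ofReal γ := by
  refine luxNorm_le_ofReal hγ ?_
  calc ∫⁻ z, ENNReal.ofReal (phiPK p κ (S.indicator 1 z / γ)) ∂μ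
      = ENNReal.ofReal (phiPK p κ γ⁻¹) * μ S := lintegral_comp_indicator_one_div phiPK_zero hS
    _ ≤ ENNReal.ofReal (γ⁻¹ ^ p) * ENNReal.ofReal (γ ^ p) := by
        gcongr
        exact phiPK_le_rpow hκ (inv_pos.2 hγ)
    _ = 1 := by
        rw [← ENNReal.ofReal_mul (by positivity), ← mul_rpow (by positivity) hγ.le,
          inv_mul_cancel₀ hγ.ne', one_rpow, ENNReal.ofReal_one]

theorem luxNorm_count_phiPK_lt_top [MeasurableSingletonClass Z] (hp : 0 < p) (hκ : 0 ≤ κ)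
    {a : Z → ℝ} (ha : ∀ z, 0 < a z) (hsum : Summable fun z ↦ phiPK p κ (a z)) :
    luxNorm Measure.count (phiPK p κ) a < ⊤ := by
  obtain ⟨γ, hγ, hγp⟩ : ∃ γ : ℝ, 1 ≤ γ ∧ ∑' z, phiPK p κ (a z) ≤ γ ^ p :=
    ((Filter.eventually_ge_atTop 1).and
      ((tendsto_rpow_atTop hp).eventually_ge_atTop _)).exists
  have hγ0 : 0 < γ := by linarith
  refine (luxNorm_le_ofReal hγ0 ?_).trans_lt ENNReal.ofReal_lt_top
  calc ∫⁻ z, ENNReal.ofReal (phiPK p κ (a z / γ)) ∂Measure.count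
      = ∑' z, ENNReal.ofReal (phiPK p κ (a z / γ)) := lintegral_count _
    _ ≤ ∑' z, ENNReal.ofReal (phiPK p κ (a z) / γ ^ p) := by
        gcongr with z
        exact phiPK_div_le hκ (ha z) hγ
    _ = ENNReal.ofReal ((∑' z, phiPK p κ (a z)) / γ ^ p) := by
        rw [← tsum_div_const, ENNReal.ofReal_tsum_of_nonneg
          (fun z ↦ div_nonneg (phiPK_nonneg (ha z).le) (by positivity)) (hsum.div_const _)]
    _ ≤ 1 := ENNReal.ofReal_le_one.2 (div_le_one_of_le₀ hγp (by positivity))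

end LuxembourgNorm

section Intervals

open Metric Set

variable {ε : ℝ} {r : ℤ → ℝ}

theorem one_le_dist_int_add {m n : ℤ} (h : m ≠ n) (x : ℝ) :
    1 ≤ dist ((m : ℝ) + x) ((n : ℝ) + x) := by
  rw [dist_add_right, Int.dist_cast_real, Int.dist_eq]
  exact_mod_cast Int.one_le_abs (sub_ne_zero.2 h)

theorem volume_iUnion_ball_int_add_eq_top (x : ℝ) (hr0 : ∀ n, 0 ≤ r n) (hr : ∀ n, r n ≤ 1 / 2)
    (hsum : ¬ Summable r) : volume (⋃ n : ℤ, ball ((n : ℝ) + x) (r n)) = ⊤ := by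
  have hdisj : Pairwise (Function.onFun Disjoint fun n : ℤ ↦ ball ((n : ℝ) + x) (r n)) :=
    fun m n hmn ↦ ball_disjoint_ball (by linarith [one_le_dist_int_add hmn x, hr m, hr n])
  rw [measure_iUnion hdisj fun _ ↦ measurableSet_ball]
  simp_rw [Real.volume_ball]
  by_contra hfin
  refine hsum ((summable_mul_left_iff two_ne_zero).1 ?_)
  refine (ENNReal.summable_toReal hfin).congr fun n ↦ ?_
  exact ENNReal.toReal_ofReal (mul_nonneg zero_le_two (hr0 n))

theorem Ioo_inter_iUnion_ball_int_add_half (hε : 0 ≤ ε) (hr : ∀ n, r n ≤ 1 / 2 - ε) (n : ℤ) :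
    Ioo ((n : ℝ) - ε) (n + 1 + ε) ∩ ⋃ m : ℤ, ball ((m : ℝ) + 1 / 2) (r m) =
      ball ((n : ℝ) + 1 / 2) (r n) := by
  have hIoo : Ioo ((n : ℝ) - ε) (n + 1 + ε) = ball ((n : ℝ) + 1 / 2) (1 / 2 + ε) := by
    rw [Real.ball_eq_Ioo]
    congr 1 <;> ring
  rw [hIoo]
  refine Subset.antisymm (fun x ⟨hx, hxU⟩ ↦ ?_) (subset_inter ?_ (subset_iUnion_of_subset n le_rfl))
  · obtain ⟨m, hxm⟩ := mem_iUnion.1 hxU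
    obtain rfl : m = n := by
      by_contra hmn
      refine (ball_disjoint_ball ?_).notMem_of_mem_left hxm hx
      linarith [one_le_dist_int_add hmn (1 / 2), hr m]
    exact hxm
  · exact ball_subset_ball (by linarith [hr n])

end Intervals

theorem bourdon_example_general (p κ ε : ℝ) (hp : 0 < p) (hκ : 0 < κ)
    (hε : 0 ≤ ε) (hε' : ε < 1 / 2) :
    ∃ f : ℝ → ℝ, Measurable f ∧ (∀ t, 0 ≤ f t) ∧
      (∀ γ : ℝ, 0 < γ →
        ∫⁻ t, ENNReal.ofReal (phiPK p κ (f t / γ)) = ⊤) ∧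
      luxNormENN (Measure.count : Measure ℤ) (phiPK p κ)
          (fun n : ℤ => luxNorm (volume : Measure ℝ) (phiPK p κ)
            ((Set.Ioo ((n : ℝ) - ε) ((n : ℝ) + 1 + ε)).indicator f)) < ⊤ := by
  obtain ⟨a, ha0, ha1, hdiv, hsum⟩ := exists_not_summable_rpow_summable_phiPK ℤ hp hκ
  let r (n : ℤ) : ℝ := (1 / 2 - ε) * a n ^ p
  have hδ : 0 < 1 / 2 - ε := sub_pos.2 hε'
  have hap (n : ℤ) : 0 ≤ a n ^ p := Real.rpow_nonneg (ha0 n).le p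
  have hr (n : ℤ) : r n ≤ 1 / 2 - ε :=
    mul_le_of_le_one_right hδ.le (Real.rpow_le_one (ha0 n).le (ha1 n) hp.le)
  let A : Set ℝ := ⋃ n : ℤ, Metric.ball ((n : ℝ) + 1 / 2) (r n)
  have hA : MeasurableSet A := .iUnion fun _ ↦ measurableSet_ball
  have hvol : volume A = ⊤ := volume_iUnion_ball_int_add_eq_top _
    (fun n ↦ mul_nonneg hδ.le (hap n)) (fun n ↦ (hr n).trans (by linarith))
    ((summable_mul_left_iff hδ.ne').not.2 hdiv)
  refine ⟨A.indicator 1, measurable_one.indicator hA,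
    Set.indicator_nonneg fun _ _ ↦ zero_le_one, fun γ hγ ↦ ?_, ?_⟩
  · rw [lintegral_comp_indicator_one_div phiPK_zero hA, hvol]
    exact ENNReal.mul_top (ENNReal.ofReal_pos.2 (phiPK_pos (inv_pos.2 hγ))).ne'
  · refine (luxNormENN_le_luxNorm (monotoneOn_phiPK hp.le hκ.le) (fun n ↦ (ha0 n).le)
      fun n ↦ ?_).trans_lt (luxNorm_count_phiPK_lt_top hp hκ.le ha0 hsum)
    rw [Set.indicator_indicator, Ioo_inter_iUnion_ball_int_add_half hε hr]
    refine luxNorm_phiPK_indicator_one_le hκ.le measurableSet_ball (ha0 n) ?_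
    rw [Real.volume_ball, ← mul_assoc]
    exact ENNReal.ofReal_le_ofReal (mul_le_of_le_one_left (hap n) (by linarith))

/-- Bourdon's example: for `φ = φ_{p,κ}` there is a nonnegative measurable
function `f` on `ℝ` whose global Luxembourg norm is infinite (`∫ φ(f/γ) = ∞` for every
`γ > 0`), while the sequence `θ(n) = ‖f·𝟙_{(n−ε,n+1+ε)}‖_{L^φ(ℝ)}` has finite
`ℓ^φ(ℤ)`-norm. -/
theorem bourdon_example (p κ ε : ℝ) (hp : 1 < p) (hκ : 0 < κ)
    (hε : 0 < ε) (hε' : ε < 1 / 8) :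
    ∃ f : ℝ → ℝ, Measurable f ∧ (∀ t, 0 ≤ f t) ∧
      (∀ γ : ℝ, 0 < γ →
        ∫⁻ t, ENNReal.ofReal (phiPK p κ (f t / γ)) = ⊤) ∧
      luxNormENN (Measure.count : Measure ℤ) (phiPK p κ)
          (fun n : ℤ => luxNorm (volume : Measure ℝ) (phiPK p κ)
            ((Set.Ioo ((n : ℝ) - ε) ((n : ℝ) + 1 + ε)).indicator f)) < ⊤ :=
  bourdon_example_general p κ ε (by linarith) hκ hε.le (by linarith)
end

section
/- Let (C^{k,ℓ})_{k,ℓ∈ℕ} be a doubly-indexed family of topological real vector spaces (topological additive groups with continuous ℝ-module structure), equipped with continuous linear maps d' : C^{k,ℓ} → C^{k+1,ℓ} and d'' : C^{k,ℓ} → C^{k,ℓ+1} satisfying d'∘d' = 0, d''∘d'' = 0, and d'∘d'' + d''∘d' = 0. For each ℓ let E^ℓ = ker(d' : C^{0,ℓ} → C^{1,ℓ}) with the subspace topology, with inclusion ι : E^ℓ → C^{0,ℓ}; note that d'' maps E^ℓ into E^{ℓ+1}. Assume that for every ℓ the complex (C^{•,ℓ}, d') retracts to (E^ℓ → 0 →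 0 → ⋯), i.e. there exist continuous linear maps h₀ : C^{0,ℓ} → E^ℓ with h₀∘ι = id_{E^ℓ}, and h_k : C^{k,ℓ} → C^{k−1,ℓ} for k ≥ 1, such that ι∘h₀ + h₁∘d' = id on C^{0,ℓ} and d'∘h_k + h_{k+1}∘d' = id on C^{k,ℓ} for all k ≥ 1. Define the total complex D^m = ∏_{k+ℓ=m} C^{k,ℓ} (a finite product, with the product topology) with differential δ = d' + d''. Then (D^•, δ) and (E^•, d''|_{E}) are chain homotopy equivalent through continuous linear maps: there exist continuous linear maps F^m : D^m → E^m and G^m : E^m → D^m commuting with the differentials (F^{m+1}∘δ = d''∘F^m and δ∘G^m = G^{m+1}∘d''), and continuous linear maps s^m : D^m → D^{m−1} and t^m : E^m → E^{m−1}, such that id_{D^m} − G^m∘F^m = δ∘s^m + s^{m+1}∘δ and id_{E^m} − F^m∘G^m = d''∘t^m + t^{m+1}∘d'' for all m. -/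
/-- The degree-`m` part of the total complex of a first-quadrant bicomplex:
`D^m = ∏_{k+ℓ=m} C^{k,ℓ}` (a finite product, with the product topology). -/
abbrev TotalCx (C : ℕ → ℕ → Type*) (m : ℕ) : Type _ :=
  ∀ p : {p : ℕ × ℕ // p.1 + p.2 = m}, C p.1.1 p.1.2

section TotalDiff

variable {C : ℕ → ℕ → Type*} [∀ k ℓ, AddCommGroup (C k ℓ)] [∀ k ℓ, Module ℝ (C k ℓ)]
  [∀ k ℓ, TopologicalSpace (C k ℓ)]

/-- The `d'`-part of the total differential. -/
def totalDPart (d₁ : ∀ k ℓ, C k ℓ →L[ℝ] C (k + 1) ℓ) (m : ℕ) (x : TotalCx C m) :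
    ∀ k ℓ, k + ℓ = m + 1 → C k ℓ
  | 0, _, _ => 0
  | (k + 1), ℓ, h => d₁ k ℓ (x ⟨(k, ℓ), by omega⟩)

/-- The `d''`-part of the total differential. -/
def totalDPart' (d₂ : ∀ k ℓ, C k ℓ →L[ℝ] C k (ℓ + 1)) (m : ℕ) (x : TotalCx C m) :
    ∀ k ℓ, k + ℓ = m + 1 → C k ℓ
  | _, 0, _ => 0
  | k, (ℓ + 1), h => d₂ k ℓ (x ⟨(k, ℓ), by omega⟩)

/-- The total differential `δ = d' + d''` of the bicomplex. -/
def totalδ (d₁ : ∀ k ℓ, C k ℓ →L[ℝ] C (k + 1) ℓ) (d₂ : ∀ k ℓ, C k ℓ →L[ℝ] C k (ℓ + 1))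
    (m : ℕ) (x : TotalCx C m) : TotalCx C (m + 1) :=
  fun p => totalDPart d₁ m x p.1.1 p.1.2 p.2 + totalDPart' d₂ m x p.1.1 p.1.2 p.2

end TotalDiff

/-!
The rows are contracted by `h` with respect to `d'` alone, and `d''` is treated as a perturbation of
`d'`. On total degree `m` the endomorphism `h d''` raises the second index, so it is nilpotent and
`1 + h d''` is invertible; this is exactly what the homological perturbation lemma needs in order to
replace `h` by the homotopy `s = (1 + h d'')⁻¹ h` for `δ = d' + d''`. Since `s z` is the unique
solution `x` of `x + h d'' x = h z`, one finds `s δ = h d' (1 - d'' s)`, and the homotopy identity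
for `s` becomes the one for `h` evaluated at `(1 - d'' s) x`. The inclusion of the kernels needs no
correction, and the projection `h₀` becomes `h₀ (1 - d'' s)`.
-/

section Perturbation

variable {R : Type*} [Ring R] {D E : ℕ → Type*}
  [∀ m, AddCommGroup (D m)] [∀ m, Module R (D m)] [∀ m, TopologicalSpace (D m)]
  [∀ m, IsTopologicalAddGroup (D m)]
  [∀ m, AddCommGroup (E m)] [∀ m, Module R (E m)] [∀ m, TopologicalSpace (E m)]

variable (R D E) in
/-- A deformation retraction of the graded topological module `D`, with differential `d`, onto `E`
with zero differential, together with a small perturbation `p` of `d` which restricts to `dE`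
on `E`: the input of the homological perturbation lemma. The contraction identity is split in two
because `D` has nothing below degree `0`. -/
structure PerturbedRetraction where
  d : ∀ m, D m →L[R] D (m + 1)
  p : ∀ m, D m →L[R] D (m + 1)
  h : ∀ m, D (m + 1) →L[R] D m
  incl : ∀ m, E m →L[R] D m
  proj : ∀ m, D m →L[R] E m
  dE : ∀ m, E m →L[R] E (m + 1)
  p_p : ∀ m x, p (m + 1) (p m x) = 0
  p_d_add_d_p : ∀ m x, p (m + 1) (d m x) + d (m + 1) (p m x) = 0
  contract_zero : ∀ x, h 0 (d 0 x) + incl 0 (proj 0 x) = x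
  contract_succ : ∀ m x,
    d m (h m x) + h (m + 1) (d (m + 1) x) + incl (m + 1) (proj (m + 1) x) = x
  proj_incl : ∀ m y, proj m (incl m y) = y
  d_incl : ∀ m y, d m (incl m y) = 0
  p_incl : ∀ m y, p m (incl m y) = incl (m + 1) (dE m y)
  h_incl : ∀ m y, h m (incl (m + 1) y) = 0
  proj_d : ∀ m x, proj (m + 1) (d m x) = 0
  isUnit_one_add : ∀ m, IsUnit (1 + h m ∘L p m)

namespace PerturbedRetraction

variable (P : PerturbedRetraction R D E)

/-- The differential `d + p` of the perturbed complex. -/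
def diff (m : ℕ) : D m →L[R] D (m + 1) :=
  P.d m + P.p m

/-- The homotopy `s = (1 + h p)⁻¹ h` of the perturbed complex. -/
noncomputable def homotopy (m : ℕ) : D (m + 1) →L[R] D m :=
  Ring.inverse (1 + P.h m ∘L P.p m) ∘L P.h m

/-- The operator `1 - p s`, which equals `(1 + p h)⁻¹` and is the identity in degree `0`. -/
noncomputable def correction : ∀ m, D m →L[R] D m
  | 0 => ContinuousLinearMap.id R (D 0)
  | m + 1 => ContinuousLinearMap.id R (D (m + 1)) - P.p m ∘L P.homotopy m

/-- The projection `proj (1 - p s)` of the perturbed complex onto `E`. -/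
noncomputable def perturbedProj (m : ℕ) : D m →L[R] E m :=
  P.proj m ∘L P.correction m

lemma diff_apply (m : ℕ) (x : D m) : P.diff m x = P.d m x + P.p m x := rfl

lemma correction_zero (x : D 0) : P.correction 0 x = x := rfl

lemma correction_succ (m : ℕ) (x : D (m + 1)) :
    P.correction (m + 1) x = x - P.p m (P.homotopy m x) := rfl

lemma perturbedProj_apply (m : ℕ) (x : D m) :
    P.perturbedProj m x = P.proj m (P.correction m x) := rfl

lemma homotopy_eq_iff {m : ℕ} {x : D m} {z : D (m + 1)} :
    P.homotopy m z = x ↔ x + P.h m (P.p m x) = P.h m z := by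
  set U : D m →L[R] D m := 1 + P.h m ∘L P.p m
  have hU : IsUnit U := P.isUnit_one_add m
  constructor
  · rintro rfl
    exact DFunLike.congr_fun (Ring.mul_inverse_cancel U hU) (P.h m z)
  · intro hx
    calc P.homotopy m z = Ring.inverse U (U x) := congrArg (⇑(Ring.inverse U)) hx.symm
      _ = x := DFunLike.congr_fun (Ring.inverse_mul_cancel U hU) x

lemma h_correction (m : ℕ) (x : D (m + 1)) :
    P.h m (P.correction (m + 1) x) = P.homotopy m x := by
  rw [correction_succ, map_sub, sub_eq_iff_eq_add]
  exact (P.homotopy_eq_iff.mp rfl).symm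

lemma p_correction (m : ℕ) (x : D m) : P.p m (P.correction m x) = P.p m x := by
  cases m with
  | zero => rw [correction_zero]
  | succ m => rw [correction_succ, map_sub, P.p_p, sub_zero]

lemma p_h_d_correction (m : ℕ) (x : D m) :
    P.p m (P.h m (P.d m (P.correction m x))) =
      P.diff m x - P.d m (P.correction m x) - P.incl (m + 1) (P.dE m (P.perturbedProj m x)) := by
  rw [← P.p_incl, perturbedProj_apply, diff_apply]
  cases m with
  | zero =>
    rw [correction_zero, eq_sub_of_add_eq (P.contract_zero x), map_sub]
    abel
  | succ m =>
    set y := P.correction (m + 1) x with hy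
    have h_d : P.h (m + 1) (P.d (m + 1) y) =
        y - P.incl (m + 1) (P.proj (m + 1) y) - P.d m (P.homotopy m x) := by
      rw [← P.h_correction, ← hy, eq_sub_iff_add_eq, eq_sub_iff_add_eq, add_comm (P.h _ _)]
      exact P.contract_succ m y
    have p_d : P.p (m + 1) (P.d m (P.homotopy m x)) = -P.d (m + 1) (x - y) := by
      rw [hy, correction_succ, sub_sub_cancel]
      exact eq_neg_of_add_eq_zero_left (P.p_d_add_d_p m _)
    rw [h_d, map_sub, map_sub, p_d, map_sub, P.p_correction]
    abel

lemma homotopy_diff (m : ℕ) (x : D m) :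
    P.homotopy m (P.diff m x) = P.h m (P.d m (P.correction m x)) := by
  rw [homotopy_eq_iff, p_h_d_correction, map_sub, map_sub, P.h_incl]
  abel

theorem sub_incl_perturbedProj_zero (x : D 0) :
    x - P.incl 0 (P.perturbedProj 0 x) = P.homotopy 0 (P.diff 0 x) := by
  rw [homotopy_diff, perturbedProj_apply, correction_zero]
  exact (eq_sub_of_add_eq (P.contract_zero x)).symm

theorem sub_incl_perturbedProj_succ (m : ℕ) (x : D (m + 1)) :
    x - P.incl (m + 1) (P.perturbedProj (m + 1) x) =
      P.diff m (P.homotopy m x) + P.homotopy (m + 1) (P.diff (m + 1) x) := by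
  have p_s : P.p m (P.homotopy m x) = x - P.correction (m + 1) x := (sub_sub_cancel _ _).symm
  have contract := P.contract_succ m (P.correction (m + 1) x)
  rw [h_correction] at contract
  calc x - P.incl (m + 1) (P.perturbedProj (m + 1) x)
      = x - P.correction (m + 1) x +
          (P.correction (m + 1) x - P.incl (m + 1) (P.perturbedProj (m + 1) x)) := by abel
    _ = P.p m (P.homotopy m x) +
          (P.d m (P.homotopy m x) + P.h (m + 1) (P.d (m + 1) (P.correction (m + 1) x))) := by
      rw [p_s, perturbedProj_apply, eq_sub_of_add_eq contract]
    _ = P.diff m (P.homotopy m x) + P.homotopy (m + 1) (P.diff (m + 1) x) := by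
      rw [homotopy_diff, diff_apply]
      abel

theorem perturbedProj_diff (m : ℕ) (x : D m) :
    P.perturbedProj (m + 1) (P.diff m x) = P.dE m (P.perturbedProj m x) := by
  rw [perturbedProj_apply, correction_succ, homotopy_diff, p_h_d_correction, sub_sub,
    sub_sub_cancel, map_add, P.proj_d, P.proj_incl, zero_add]

theorem diff_incl (m : ℕ) (y : E m) : P.diff m (P.incl m y) = P.incl (m + 1) (P.dE m y) := by
  rw [diff_apply, P.d_incl, P.p_incl, zero_add]

theorem perturbedProj_incl (m : ℕ) (y : E m) : P.perturbedProj m (P.incl m y) = y := by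
  have correction_incl : P.correction m (P.incl m y) = P.incl m y := by
    cases m with
    | zero => rfl
    | succ m =>
      have : P.homotopy m (P.incl (m + 1) y) = 0 := by
        rw [homotopy_eq_iff, P.h_incl, map_zero, map_zero, add_zero]
      rw [correction_succ, this, map_zero, sub_zero]
  rw [perturbedProj_apply, correction_incl, P.proj_incl]

end PerturbedRetraction

end Perturbation

lemma TotalCx.ext_columns {C : ℕ → ℕ → Type*} {m : ℕ} {x y : TotalCx C m}
    (zero : x ⟨(0, m), zero_add m⟩ = y ⟨(0, m), zero_add m⟩)
    (succ : ∀ k ℓ (hp : k + 1 + ℓ = m), x ⟨(k + 1, ℓ), hp⟩ = y ⟨(k + 1, ℓ), hp⟩) : x = y := by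
  funext ⟨⟨k, ℓ⟩, hp⟩
  cases k with
  | zero =>
    obtain rfl : ℓ = m := (zero_add ℓ).symm.trans hp
    exact zero
  | succ k => exact succ k ℓ hp

section TotalComplex

variable {R : Type*} [Ring R] {C : ℕ → ℕ → Type*} {E : ℕ → Type*}
  [∀ k ℓ, AddCommGroup (C k ℓ)] [∀ k ℓ, Module R (C k ℓ)] [∀ k ℓ, TopologicalSpace (C k ℓ)]
  [∀ ℓ, AddCommGroup (E ℓ)] [∀ ℓ, Module R (E ℓ)] [∀ ℓ, TopologicalSpace (E ℓ)]

/-- The component `D^m → C^{k,ℓ}` of the total complex, for `k + ℓ = m`. -/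
def TotalCx.component {m k ℓ : ℕ} (hp : k + ℓ = m) : TotalCx C m →L[R] C k ℓ :=
  ContinuousLinearMap.proj (φ := fun q : {q : ℕ × ℕ // q.1 + q.2 = m} => C q.1.1 q.1.2)
    ⟨(k, ℓ), hp⟩

/-- The operator induced by `d'` on the total complex. -/
def totalD₁ (d₁ : ∀ k ℓ, C k ℓ →L[R] C (k + 1) ℓ) (m : ℕ) : TotalCx C m →L[R] TotalCx C (m + 1) :=
  ContinuousLinearMap.pi fun
    | ⟨(0, _), _⟩ => 0
    | ⟨(k + 1, ℓ), hp⟩ => d₁ k ℓ ∘L TotalCx.component (by grind)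

/-- The operator induced by `d''` on the total complex. -/
def totalD₂ (d₂ : ∀ k ℓ, C k ℓ →L[R] C k (ℓ + 1)) (m : ℕ) : TotalCx C m →L[R] TotalCx C (m + 1) :=
  ContinuousLinearMap.pi fun
    | ⟨(_, 0), _⟩ => 0
    | ⟨(k, ℓ + 1), hp⟩ => d₂ k ℓ ∘L TotalCx.component (by grind)

/-- The operator induced by the row homotopies on the total complex. -/
def totalH (h : ∀ k ℓ, C (k + 1) ℓ →L[R] C k ℓ) (m : ℕ) : TotalCx C (m + 1) →L[R] TotalCx C m :=
  ContinuousLinearMap.pi fun q =>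
    h q.1.1 q.1.2 ∘L TotalCx.component (by grind)

/-- The inclusion of `E^m` into the total complex as part of the column `C^{0,•}`. -/
def totalIncl (ι : ∀ ℓ, E ℓ →L[R] C 0 ℓ) (m : ℕ) : E m →L[R] TotalCx C m :=
  ContinuousLinearMap.single R (fun q : {q : ℕ × ℕ // q.1 + q.2 = m} => C q.1.1 q.1.2)
    ⟨(0, m), zero_add m⟩ ∘L ι m

/-- The row retractions `C^{0,m} → E^m`, extended by zero to the total complex. -/
def totalProj (h₀ : ∀ ℓ, C 0 ℓ →L[R] E ℓ) (m : ℕ) : TotalCx C m →L[R] E m :=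
  h₀ m ∘L TotalCx.component (zero_add m)

section Evaluation

variable (d₁ : ∀ k ℓ, C k ℓ →L[R] C (k + 1) ℓ) (d₂ : ∀ k ℓ, C k ℓ →L[R] C k (ℓ + 1))
  (h : ∀ k ℓ, C (k + 1) ℓ →L[R] C k ℓ) (ι : ∀ ℓ, E ℓ →L[R] C 0 ℓ) (h₀ : ∀ ℓ, C 0 ℓ →L[R] E ℓ)

lemma totalD₁_apply_zero (m : ℕ) (x : TotalCx C m) {ℓ : ℕ} (hp : 0 + ℓ = m + 1) :
    totalD₁ d₁ m x ⟨(0, ℓ), hp⟩ = 0 := rfl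

lemma totalD₁_apply_succ (m : ℕ) (x : TotalCx C m) {k ℓ : ℕ} (hp : k + 1 + ℓ = m + 1) :
    totalD₁ d₁ m x ⟨(k + 1, ℓ), hp⟩ = d₁ k ℓ (x ⟨(k, ℓ), by omega⟩) := rfl

lemma totalD₂_apply_zero (m : ℕ) (x : TotalCx C m) {k : ℕ} (hp : k + 0 = m + 1) :
    totalD₂ d₂ m x ⟨(k, 0), hp⟩ = 0 := rfl

lemma totalD₂_apply_succ (m : ℕ) (x : TotalCx C m) {k ℓ : ℕ} (hp : k + (ℓ + 1) = m + 1) :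
    totalD₂ d₂ m x ⟨(k, ℓ + 1), hp⟩ = d₂ k ℓ (x ⟨(k, ℓ), by omega⟩) := rfl

lemma totalH_apply (m : ℕ) (x : TotalCx C (m + 1)) {k ℓ : ℕ} (hp : k + ℓ = m) :
    totalH h m x ⟨(k, ℓ), hp⟩ = h k ℓ (x ⟨(k + 1, ℓ), by omega⟩) := rfl

lemma totalIncl_apply_zero (m : ℕ) (y : E m) :
    totalIncl ι m y ⟨(0, m), zero_add m⟩ = ι m y :=
  Pi.single_eq_same (M := fun q : {q : ℕ × ℕ // q.1 + q.2 = m} => C q.1.1 q.1.2) _ _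

lemma totalIncl_apply_succ (m : ℕ) (y : E m) {k ℓ : ℕ} (hp : k + 1 + ℓ = m) :
    totalIncl ι m y ⟨(k + 1, ℓ), hp⟩ = 0 :=
  Pi.single_eq_of_ne (M := fun q : {q : ℕ × ℕ // q.1 + q.2 = m} => C q.1.1 q.1.2)
    (i := ⟨(0, m), zero_add m⟩) (i' := ⟨(k + 1, ℓ), hp⟩) (by simp) (ι m y)

lemma totalProj_apply (m : ℕ) (x : TotalCx C m) :
    totalProj h₀ m x = h₀ m (x ⟨(0, m), zero_add m⟩) := rfl

end Evaluation

section Differentials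

variable {d₁ : ∀ k ℓ, C k ℓ →L[R] C (k + 1) ℓ} {d₂ : ∀ k ℓ, C k ℓ →L[R] C k (ℓ + 1)}

lemma totalD₂_totalD₂ (hd₂ : ∀ k ℓ (x : C k ℓ), d₂ k (ℓ + 1) (d₂ k ℓ x) = 0)
    (m : ℕ) (x : TotalCx C m) : totalD₂ d₂ (m + 1) (totalD₂ d₂ m x) = 0 := by
  funext ⟨⟨k, ℓ⟩, hp⟩
  match ℓ with
  | 0 => rfl
  | 1 => exact map_zero (d₂ k 0)
  | ℓ + 2 => exact hd₂ k ℓ _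

lemma totalD₂_totalD₁_add_totalD₁_totalD₂
    (hanti : ∀ k ℓ (x : C k ℓ), d₂ (k + 1) ℓ (d₁ k ℓ x) + d₁ k (ℓ + 1) (d₂ k ℓ x) = 0)
    (m : ℕ) (x : TotalCx C m) :
    totalD₂ d₂ (m + 1) (totalD₁ d₁ m x) + totalD₁ d₁ (m + 1) (totalD₂ d₂ m x) = 0 := by
  funext ⟨⟨k, ℓ⟩, hp⟩
  rw [Pi.add_apply]
  match k, ℓ with
  | 0, 0 => exact add_zero 0
  | 0, ℓ + 1 =>
    rw [totalD₂_apply_succ, totalD₁_apply_zero, totalD₁_apply_zero, map_zero]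
    exact add_zero 0
  | k + 1, 0 =>
    rw [totalD₁_apply_succ, totalD₂_apply_zero, totalD₂_apply_zero, map_zero]
    exact add_zero 0
  | k + 1, ℓ + 1 => exact hanti k ℓ _

end Differentials

section Contraction

variable {d₁ : ∀ k ℓ, C k ℓ →L[R] C (k + 1) ℓ} {h : ∀ k ℓ, C (k + 1) ℓ →L[R] C k ℓ}
  {ι : ∀ ℓ, E ℓ →L[R] C 0 ℓ} {h₀ : ∀ ℓ, C 0 ℓ →L[R] E ℓ}

lemma totalH_contract_zero (hret0 : ∀ ℓ (x : C 0 ℓ), ι ℓ (h₀ ℓ x) + h 0 ℓ (d₁ 0 ℓ x) = x)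
    (x : TotalCx C 0) :
    totalH h 0 (totalD₁ d₁ 0 x) + totalIncl ι 0 (totalProj h₀ 0 x) = x := by
  refine TotalCx.ext_columns ?_ fun k ℓ hp => by omega
  rw [Pi.add_apply, totalH_apply, totalD₁_apply_succ, totalIncl_apply_zero, totalProj_apply,
    add_comm]
  exact hret0 0 _

lemma totalH_contract_succ
    (hret0 : ∀ ℓ (x : C 0 ℓ), ι ℓ (h₀ ℓ x) + h 0 ℓ (d₁ 0 ℓ x) = x)
    (hret : ∀ k ℓ (x : C (k + 1) ℓ), d₁ k ℓ (h k ℓ x) + h (k + 1) ℓ (d₁ (k + 1) ℓ x) = x)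
    (m : ℕ) (x : TotalCx C (m + 1)) :
    totalD₁ d₁ m (totalH h m x) + totalH h (m + 1) (totalD₁ d₁ (m + 1) x) +
      totalIncl ι (m + 1) (totalProj h₀ (m + 1) x) = x := by
  refine TotalCx.ext_columns ?_ fun k ℓ hp => ?_ <;> rw [Pi.add_apply, Pi.add_apply]
  · rw [totalD₁_apply_zero, totalH_apply, totalD₁_apply_succ, totalIncl_apply_zero,
      totalProj_apply, zero_add, add_comm (h 0 (m + 1) _)]
    exact hret0 (m + 1) _
  · rw [totalIncl_apply_succ, add_zero]
    exact hret k ℓ _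

lemma totalProj_totalIncl (hsec : ∀ ℓ (y : E ℓ), h₀ ℓ (ι ℓ y) = y) (m : ℕ) (y : E m) :
    totalProj h₀ m (totalIncl ι m y) = y := by
  rw [totalProj_apply, totalIncl_apply_zero, hsec]

lemma totalProj_totalD₁ (m : ℕ) (x : TotalCx C m) :
    totalProj h₀ (m + 1) (totalD₁ d₁ m x) = 0 :=
  map_zero (h₀ (m + 1))

lemma totalH_totalIncl (m : ℕ) (y : E (m + 1)) : totalH h m (totalIncl ι (m + 1) y) = 0 := by
  funext ⟨⟨k, ℓ⟩, hp⟩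
  rw [totalH_apply, totalIncl_apply_succ, map_zero]
  rfl

lemma totalD₁_totalIncl (hι : ∀ ℓ (y : E ℓ), d₁ 0 ℓ (ι ℓ y) = 0) (m : ℕ) (y : E m) :
    totalD₁ d₁ m (totalIncl ι m y) = 0 := by
  refine TotalCx.ext_columns rfl fun k ℓ hp => ?_
  rw [totalD₁_apply_succ]
  cases k with
  | zero =>
    obtain rfl : ℓ = m := by omega
    rw [totalIncl_apply_zero, hι]
    rfl
  | succ k =>
    rw [totalIncl_apply_succ, map_zero]
    rfl

end Contraction

section Nilpotency

variable {d₂ : ∀ k ℓ, C k ℓ →L[R] C k (ℓ + 1)}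

lemma totalD₂_totalIncl {ι : ∀ ℓ, E ℓ →L[R] C 0 ℓ} {dE : ∀ ℓ, E ℓ →L[R] E (ℓ + 1)}
    (hdE : ∀ ℓ (y : E ℓ), ι (ℓ + 1) (dE ℓ y) = d₂ 0 ℓ (ι ℓ y)) (m : ℕ) (y : E m) :
    totalD₂ d₂ m (totalIncl ι m y) = totalIncl ι (m + 1) (dE m y) := by
  refine TotalCx.ext_columns ?_ fun k ℓ hp => ?_
  · rw [totalD₂_apply_succ, totalIncl_apply_zero, totalIncl_apply_zero, hdE]
  · rw [totalIncl_apply_succ]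
    cases ℓ with
    | zero => rfl
    | succ ℓ => rw [totalD₂_apply_succ, totalIncl_apply_succ, map_zero]

variable (d₂) (h : ∀ k ℓ, C (k + 1) ℓ →L[R] C k ℓ)

lemma totalH_comp_totalD₂_pow_apply (m n : ℕ) (x : TotalCx C m) {k ℓ : ℕ} (hp : k + ℓ = m)
    (hℓ : ℓ < n) : ((totalH h m ∘L totalD₂ d₂ m) ^ n) x ⟨(k, ℓ), hp⟩ = 0 := by
  induction n generalizing k ℓ with
  | zero => omega
  | succ n ih =>
    rw [pow_succ', mul_apply_eq_comp, ContinuousLinearMap.comp_apply, totalH_apply]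
    cases ℓ with
    | zero => rw [totalD₂_apply_zero, map_zero]
    | succ ℓ => rw [totalD₂_apply_succ, ih _ (by omega), map_zero, map_zero]

lemma isNilpotent_totalH_comp_totalD₂ (m : ℕ) : IsNilpotent (totalH h m ∘L totalD₂ d₂ m) := by
  refine ⟨m + 1, ?_⟩
  ext x ⟨⟨k, ℓ⟩, hp⟩
  exact totalH_comp_totalD₂_pow_apply d₂ h m (m + 1) x hp (by omega)

end Nilpotency

variable [∀ k ℓ, IsTopologicalAddGroup (C k ℓ)]

/-- The contraction of the rows of a bicomplex, assembled into a retraction of the total complex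
with differential `d'` onto `E`; the perturbation is `d''`. -/
def totalRetraction
    (d₁ : ∀ k ℓ, C k ℓ →L[R] C (k + 1) ℓ) (d₂ : ∀ k ℓ, C k ℓ →L[R] C k (ℓ + 1))
    (hd₂ : ∀ k ℓ (x : C k ℓ), d₂ k (ℓ + 1) (d₂ k ℓ x) = 0)
    (hanti : ∀ k ℓ (x : C k ℓ), d₂ (k + 1) ℓ (d₁ k ℓ x) + d₁ k (ℓ + 1) (d₂ k ℓ x) = 0)
    (ι : ∀ ℓ, E ℓ →L[R] C 0 ℓ) (hι : ∀ ℓ (y : E ℓ), d₁ 0 ℓ (ι ℓ y) = 0)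
    (dE : ∀ ℓ, E ℓ →L[R] E (ℓ + 1))
    (hdE : ∀ ℓ (y : E ℓ), ι (ℓ + 1) (dE ℓ y) = d₂ 0 ℓ (ι ℓ y))
    (h₀ : ∀ ℓ, C 0 ℓ →L[R] E ℓ) (h : ∀ k ℓ, C (k + 1) ℓ →L[R] C k ℓ)
    (hsec : ∀ ℓ (y : E ℓ), h₀ ℓ (ι ℓ y) = y)
    (hret0 : ∀ ℓ (x : C 0 ℓ), ι ℓ (h₀ ℓ x) + h 0 ℓ (d₁ 0 ℓ x) = x)
    (hret : ∀ k ℓ (x : C (k + 1) ℓ), d₁ k ℓ (h k ℓ x) + h (k + 1) ℓ (d₁ (k + 1) ℓ x) = x) :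
    PerturbedRetraction R (TotalCx C) E where
  d := totalD₁ d₁
  p := totalD₂ d₂
  h := totalH h
  incl := totalIncl ι
  proj := totalProj h₀
  dE := dE
  p_p := totalD₂_totalD₂ hd₂
  p_d_add_d_p := totalD₂_totalD₁_add_totalD₁_totalD₂ hanti
  contract_zero := totalH_contract_zero hret0
  contract_succ := totalH_contract_succ hret0 hret
  proj_incl := totalProj_totalIncl hsec
  d_incl := totalD₁_totalIncl hι
  p_incl := totalD₂_totalIncl hdE
  h_incl := totalH_totalIncl
  proj_d := totalProj_totalD₁
  isUnit_one_add m := (isNilpotent_totalH_comp_totalD₂ d₂ h m).isUnit_one_add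

end TotalComplex

lemma totalδ_eq_totalD₁_add_totalD₂ {C : ℕ → ℕ → Type*} [∀ k ℓ, AddCommGroup (C k ℓ)]
    [∀ k ℓ, Module ℝ (C k ℓ)] [∀ k ℓ, TopologicalSpace (C k ℓ)]
    (d₁ : ∀ k ℓ, C k ℓ →L[ℝ] C (k + 1) ℓ) (d₂ : ∀ k ℓ, C k ℓ →L[ℝ] C k (ℓ + 1))
    (m : ℕ) (x : TotalCx C m) : totalδ d₁ d₂ m x = totalD₁ d₁ m x + totalD₂ d₂ m x := by
  funext ⟨⟨k, ℓ⟩, hp⟩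
  cases k <;> cases ℓ <;> rfl

theorem bicomplex_total_homotopy_equiv_general
    {R : Type*} [Ring R] (C : ℕ → ℕ → Type*) (E : ℕ → Type*)
    [∀ k ℓ, AddCommGroup (C k ℓ)] [∀ k ℓ, Module R (C k ℓ)]
    [∀ k ℓ, TopologicalSpace (C k ℓ)] [∀ k ℓ, IsTopologicalAddGroup (C k ℓ)]
    [∀ ℓ, AddCommGroup (E ℓ)] [∀ ℓ, Module R (E ℓ)] [∀ ℓ, TopologicalSpace (E ℓ)]
    (d₁ : ∀ k ℓ, C k ℓ →L[R] C (k + 1) ℓ) (d₂ : ∀ k ℓ, C k ℓ →L[R] C k (ℓ + 1))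
    (hd₂ : ∀ k ℓ (x : C k ℓ), d₂ k (ℓ + 1) (d₂ k ℓ x) = 0)
    (hanti : ∀ k ℓ (x : C k ℓ), d₂ (k + 1) ℓ (d₁ k ℓ x) + d₁ k (ℓ + 1) (d₂ k ℓ x) = 0)
    (ι : ∀ ℓ, E ℓ →L[R] C 0 ℓ) (hι : ∀ ℓ (y : E ℓ), d₁ 0 ℓ (ι ℓ y) = 0)
    (dE : ∀ ℓ, E ℓ →L[R] E (ℓ + 1))
    (hdE : ∀ ℓ (y : E ℓ), ι (ℓ + 1) (dE ℓ y) = d₂ 0 ℓ (ι ℓ y))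
    (h₀ : ∀ ℓ, C 0 ℓ →L[R] E ℓ) (h : ∀ k ℓ, C (k + 1) ℓ →L[R] C k ℓ)
    (hsec : ∀ ℓ (y : E ℓ), h₀ ℓ (ι ℓ y) = y)
    (hret0 : ∀ ℓ (x : C 0 ℓ), ι ℓ (h₀ ℓ x) + h 0 ℓ (d₁ 0 ℓ x) = x)
    (hret : ∀ k ℓ (x : C (k + 1) ℓ), d₁ k ℓ (h k ℓ x) + h (k + 1) ℓ (d₁ (k + 1) ℓ x) = x) :
    ∃ (F : ∀ m, TotalCx C m →L[R] E m) (G : ∀ m, E m →L[R] TotalCx C m)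
      (s : ∀ m, TotalCx C (m + 1) →L[R] TotalCx C m),
      (∀ m x, F (m + 1) (totalD₁ d₁ m x + totalD₂ d₂ m x) = dE m (F m x)) ∧
      (∀ m y, totalD₁ d₁ m (G m y) + totalD₂ d₂ m (G m y) = G (m + 1) (dE m y)) ∧
      (∀ x, x - G 0 (F 0 x) = s 0 (totalD₁ d₁ 0 x + totalD₂ d₂ 0 x)) ∧
      (∀ m x, x - G (m + 1) (F (m + 1) x) =
        totalD₁ d₁ m (s m x) + totalD₂ d₂ m (s m x) +
          s (m + 1) (totalD₁ d₁ (m + 1) x + totalD₂ d₂ (m + 1) x)) ∧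
      (∀ m y, F m (G m y) = y) :=
  let P := totalRetraction d₁ d₂ hd₂ hanti ι hι dE hdE h₀ h hsec hret0 hret
  ⟨P.perturbedProj, P.incl, P.homotopy, P.perturbedProj_diff, P.diff_incl,
    P.sub_incl_perturbedProj_zero, P.sub_incl_perturbedProj_succ, P.perturbedProj_incl⟩

/-- the bicomplex lemma: given a first-quadrant bicomplex `(C^{k,ℓ})` of
topological real vector spaces with continuous differentials `d'`, `d''` satisfying
`d'd' = 0`, `d''d'' = 0`, `d'd'' + d''d' = 0`, whose rows retract continuously onto
`E^ℓ = ker(d' : C^{0,ℓ} → C^{1,ℓ})`, the total complex `(D^•, δ = d' + d'')` is chain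
homotopy equivalent, through continuous linear maps, to `(E^•, d''|_E)`. -/
theorem bicomplex_total_homotopy_equiv
    (C : ℕ → ℕ → Type*) [∀ k ℓ, AddCommGroup (C k ℓ)] [∀ k ℓ, Module ℝ (C k ℓ)]
    [∀ k ℓ, TopologicalSpace (C k ℓ)] [∀ k ℓ, IsTopologicalAddGroup (C k ℓ)]
    [∀ k ℓ, ContinuousSMul ℝ (C k ℓ)]
    (d₁ : ∀ k ℓ, C k ℓ →L[ℝ] C (k + 1) ℓ)
    (d₂ : ∀ k ℓ, C k ℓ →L[ℝ] C k (ℓ + 1))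
    (hd₁ : ∀ k ℓ (x : C k ℓ), d₁ (k + 1) ℓ (d₁ k ℓ x) = 0)
    (hd₂ : ∀ k ℓ (x : C k ℓ), d₂ k (ℓ + 1) (d₂ k ℓ x) = 0)
    (hanti : ∀ k ℓ (x : C k ℓ), d₂ (k + 1) ℓ (d₁ k ℓ x) + d₁ k (ℓ + 1) (d₂ k ℓ x) = 0)
    -- `d''` restricts to a continuous linear map `E^ℓ → E^{ℓ+1}`:
    (d₂E : ∀ ℓ, ↥(LinearMap.ker (d₁ 0 ℓ).toLinearMap) →L[ℝ] ↥(LinearMap.ker (d₁ 0 (ℓ + 1)).toLinearMap))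
    (hd₂E : ∀ ℓ (x : ↥(LinearMap.ker (d₁ 0 ℓ).toLinearMap)),
      (d₂E ℓ x : C 0 (ℓ + 1)) = d₂ 0 ℓ (x : C 0 ℓ))
    -- every row retracts continuously onto `E^ℓ`:
    (h₀ : ∀ ℓ, C 0 ℓ →L[ℝ] ↥(LinearMap.ker (d₁ 0 ℓ).toLinearMap))
    (h : ∀ k ℓ, C (k + 1) ℓ →L[ℝ] C k ℓ)
    (hsec : ∀ ℓ (y : ↥(LinearMap.ker (d₁ 0 ℓ).toLinearMap)), h₀ ℓ (y : C 0 ℓ) = y)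
    (hret0 : ∀ ℓ (x : C 0 ℓ), ((h₀ ℓ x : C 0 ℓ)) + h 0 ℓ (d₁ 0 ℓ x) = x)
    (hret : ∀ k ℓ (x : C (k + 1) ℓ),
      d₁ k ℓ (h k ℓ x) + h (k + 1) ℓ (d₁ (k + 1) ℓ x) = x) :
    ∃ (F : ∀ m, TotalCx C m →L[ℝ] ↥(LinearMap.ker (d₁ 0 m).toLinearMap))
      (G : ∀ m, ↥(LinearMap.ker (d₁ 0 m).toLinearMap) →L[ℝ] TotalCx C m)
      (s : ∀ m, TotalCx C (m + 1) →L[ℝ] TotalCx C m)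
      (t : ∀ m, ↥(LinearMap.ker (d₁ 0 (m + 1)).toLinearMap) →L[ℝ] ↥(LinearMap.ker (d₁ 0 m).toLinearMap)),
      -- `F` and `G` are chain maps:
      (∀ m (x : TotalCx C m), F (m + 1) (totalδ d₁ d₂ m x) = d₂E m (F m x)) ∧
      (∀ m (y : ↥(LinearMap.ker (d₁ 0 m).toLinearMap)),
        totalδ d₁ d₂ m (G m y) = G (m + 1) (d₂E m y)) ∧
      -- `s` is a homotopy from `G ∘ F` to the identity of the total complex:
      (∀ x : TotalCx C 0, x - G 0 (F 0 x) = s 0 (totalδ d₁ d₂ 0 x)) ∧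
      (∀ m (x : TotalCx C (m + 1)),
        x - G (m + 1) (F (m + 1) x) =
          totalδ d₁ d₂ m (s m x) + s (m + 1) (totalδ d₁ d₂ (m + 1) x)) ∧
      -- `t` is a homotopy from `F ∘ G` to the identity of `(E^•, d''|_E)`:
      (∀ y : ↥(LinearMap.ker (d₁ 0 0).toLinearMap), y - F 0 (G 0 y) = t 0 (d₂E 0 y)) ∧
      (∀ m (y : ↥(LinearMap.ker (d₁ 0 (m + 1)).toLinearMap)),
        y - F (m + 1) (G (m + 1) y) = d₂E m (t m y) + t (m + 1) (d₂E (m + 1) y)) := by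
  obtain ⟨F, G, s, hF, hG, hs0, hs, hFG⟩ := bicomplex_total_homotopy_equiv_general C
    (fun ℓ => ↥(LinearMap.ker (d₁ 0 ℓ).toLinearMap)) d₁ d₂ hd₂ hanti
    (fun ℓ => Submodule.subtypeL _) (fun ℓ y => y.2) d₂E hd₂E h₀ h hsec hret0 hret
  simp only [totalδ_eq_totalD₁_add_totalD₂]
  exact ⟨F, G, s, 0, hF, hG, hs0, hs, by simp [hFG], by simp [hFG]⟩
end
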